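/- arXiv:1706.06578 — 3 statements merged into one kernel-verified Lean document; each statement's English description precedes it below -/
import Mathlib

section
/- Let r ≥ 3 and q = p^h with p prime, h ≥ 1, and let V be a quasi-Hermitian variety of PG(r,q^2). Then for every line ℓ of PG(r,q^2) there exists at least one plane π containing ℓ such that |π ∩ V| ≤ q^3 + q^2 + q + 1. -/
/-!
Common framework: `ProjPoint F n` is the set of points of the projective space
PG(n-1, |F|) (so PG(r, q²) corresponds to `n = r + 1` and `Fintype.card F = q ^ 2`).
Projective subspaces of projective dimension `k` are the submodules of `Fin n → F`
of `finrank` equal to `k + 1`; lines have finrank 2, planes finrank 3 and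
hyperplanes finrank `n - 1 = r`.
-/

open Module Matrix

/-- The points of the projective space PG(n-1, |F|): one-dimensional subspaces
of `F^n`. -/
def ProjPoint (F : Type) [Field F] (n : ℕ) : Type :=
  {W : Submodule F (Fin n → F) // finrank F W = 1}

/-- The set of projective points lying in a given subspace `W`. -/
def pointsIn (F : Type) [Field F] (n : ℕ) (W : Submodule F (Fin n → F)) :
    Set (ProjPoint F n) :=
  {P | P.1 ≤ W}

/-- The number of points of `V` lying in the subspace `W`. -/
noncomputable def secant (F : Type) [Field F] (n : ℕ) (V : Set (ProjPoint F n))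
    (W : Submodule F (Fin n → F)) : ℕ :=
  (V ∩ pointsIn F n W).ncard

/-- The characteristic vector of a set of projective points, with values in `F_p`. -/
noncomputable def charVec (F : Type) [Field F] (p n : ℕ) (S : Set (ProjPoint F n)) :
    ProjPoint F n → ZMod p :=
  Set.indicator S 1

/-- `C_p`: the `F_p`-code spanned by the characteristic vectors of hyperplanes. -/
def hypCode (F : Type) [Field F] (p n : ℕ) :
    Submodule (ZMod p) (ProjPoint F n → ZMod p) :=
  Submodule.span (ZMod p)
    {v | ∃ H : Submodule F (Fin n → F), finrank F H = n - 1 ∧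
      v = charVec F p n (pointsIn F n H)}

/-- A quasi-Hermitian variety of PG(r, q²): it has the size of a non-singular
Hermitian variety and the same two intersection numbers with hyperplanes.
(All identities are stated multiplied through by `q² - 1`.) -/
def IsQuasiHermitian (F : Type) [Field F] (q r : ℕ)
    (V : Set (ProjPoint F (r + 1))) : Prop :=
  (V.ncard : ℤ) * ((q : ℤ) ^ 2 - 1)
      = ((q : ℤ) ^ (r + 1) + (-1) ^ r) * ((q : ℤ) ^ r - (-1) ^ r) ∧
  ∀ H : Submodule F (Fin (r + 1) → F), finrank F H = r →
    ((secant F (r + 1) V H : ℤ) * ((q : ℤ) ^ 2 - 1)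
        = ((q : ℤ) ^ r + (-1) ^ (r - 1)) * ((q : ℤ) ^ (r - 1) - (-1) ^ (r - 1)) ∨
     (secant F (r + 1) V H : ℤ) * ((q : ℤ) ^ 2 - 1)
        = ((q : ℤ) ^ 2 - 1)
          + (q : ℤ) ^ 2 * (((q : ℤ) ^ (r - 1) + (-1) ^ r) * ((q : ℤ) ^ (r - 2) - (-1) ^ r)))

/-- The zero set, in PG(n-1,|F|), of the Hermitian form `x ↦ xᵀ A x^(q)`. -/
def hermSet (F : Type) [Field F] (q n : ℕ) (A : Matrix (Fin n) (Fin n) F) :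
    Set (ProjPoint F n) :=
  {P | ∀ x ∈ P.1, ∑ i, ∑ j, x i * A i j * (x j) ^ q = 0}

/-- A non-singular Hermitian variety of PG(n-1, q²). -/
def IsNonsingHermitian (F : Type) [Field F] (q n : ℕ)
    (V : Set (ProjPoint F n)) : Prop :=
  ∃ A : Matrix (Fin n) (Fin n) F, IsUnit A.det ∧
    Aᵀ = A.map (fun a => a ^ q) ∧ V = hermSet F q n A

/-- A singular Hermitian variety of PG(n-1, q²) whose singular space (the radical
of the Hermitian form) has projective dimension `d`. -/
def IsSingularHermitian (F : Type) [Field F] (q n d : ℕ)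
    (S : Set (ProjPoint F n)) : Prop :=
  ∃ A : Matrix (Fin n) (Fin n) F,
    Aᵀ = A.map (fun a => a ^ q) ∧
    finrank F (LinearMap.ker (Matrix.toLin' Aᵀ)) = d + 1 ∧
    S = hermSet F q n A

/-- A `d`-singular quasi-Hermitian variety of PG(r, q²). -/
def IsSingularQuasiHermitian (F : Type) [Field F] (q r d : ℕ)
    (S : Set (ProjPoint F (r + 1))) : Prop :=
  ∃ S₀ : Set (ProjPoint F (r + 1)), IsSingularHermitian F q (r + 1) d S₀ ∧
    S.ncard = S₀.ncard ∧
    ∀ H : Submodule F (Fin (r + 1) → F), finrank F H = r →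
      ∃ H₀ : Submodule F (Fin (r + 1) → F), finrank F H₀ = r ∧
        secant F (r + 1) S H = secant F (r + 1) S₀ H₀

/-- `U` is a classical unital (Hermitian curve) of the plane `π` of PG(n-1, q²):
in some coordinatization `e` of `π`, it is the zero set of a non-degenerate
Hermitian form on `F³`. -/
def IsClassicalUnital (F : Type) [Field F] (q n : ℕ)
    (π : Submodule F (Fin n → F)) (U : Set (ProjPoint F n)) : Prop :=
  ∃ e : (Fin 3 → F) →ₗ[F] (Fin n → F), LinearMap.ker e = ⊥ ∧ LinearMap.range e = π ∧
    ∃ A : Matrix (Fin 3) (Fin 3) F, IsUnit A.det ∧ Aᵀ = A.map (fun a => a ^ q) ∧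
      U = {P | ∃ y : Fin 3 → F, y ≠ 0 ∧ P.1 = Submodule.span F {e y} ∧
        ∑ i, ∑ j, y i * A i j * (y j) ^ q = 0}

open Module in
lemma aux_sup {F : Type} [Field F] {n : ℕ} (L W : Submodule F (Fin n → F))
    (hL : finrank F L = 2) (hW : finrank F W = 1) (h : ¬ W ≤ L) :
    finrank F (L ⊔ W : Submodule F (Fin n → F)) = 3 := by
  have h1 := Submodule.finrank_sup_add_finrank_inf_eq L W
  have h2 : finrank F (L ⊓ W : Submodule F (Fin n → F)) < finrank F W := by
    apply Submodule.finrank_lt_finrank_of_lt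
    refine lt_of_le_of_ne inf_le_right ?_
    intro h3
    exact h (inf_eq_right.mp h3)
  omega

lemma aux_exch {F : Type} [Field F] {n : ℕ} (L W W' : Submodule F (Fin n → F))
    (hL : finrank F L = 2) (hW : finrank F W = 1) (h : ¬ W ≤ L)
    (hW' : finrank F W' = 1) (h' : ¬ W' ≤ L) (hle : W ≤ L ⊔ W') : W' ≤ L ⊔ W := by
  have h1 : L ⊔ W = L ⊔ W' := by
    apply Submodule.eq_of_le_of_finrank_eq (sup_le le_sup_left hle)
    rw [aux_sup L W hL hW h, aux_sup L W' hL hW' h']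
  rw [h1]
  exact le_sup_right

instance aux_fin {F : Type} [Field F] [Fintype F] (n : ℕ) : Finite (ProjPoint F n) := by
  unfold ProjPoint
  infer_instance

lemma aux_card {F : Type} [Field F] [Fintype F] {n : ℕ} (W : Submodule F (Fin n → F)) :
    (W : Set (Fin n → F)).ncard = Fintype.card F ^ finrank F W := by
  rw [← Nat.card_coe_set_eq, ← Nat.card_eq_fintype_card]
  exact Module.natCard_eq_pow_finrank (K := F) (V := W)

open Classical in
lemma aux_line {F : Type} [Field F] [Fintype F] {n Q : ℕ} (hF : Fintype.card F = Q)
    (V : Set (ProjPoint F n)) (L : Submodule F (Fin n → F)) (hL : finrank F L = 2) :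
    secant F n V L ≤ Q + 1 := by
  have hQ : 1 < Q := hF ▸ Fintype.one_lt_card
  haveI : Fintype (ProjPoint F n) := Fintype.ofFinite _
  let S : Finset (ProjPoint F n) := (V ∩ pointsIn F n L).toFinset
  let T : Finset (Fin n → F) := ((L : Set (Fin n → F)) \ {0}).toFinset
  have hS : secant F n V L = S.card := Set.ncard_eq_toFinset_card' _
  have hT : T.card = Q ^ 2 - 1 := by
    rw [← Set.ncard_eq_toFinset_card', Set.ncard_diff_singleton_of_mem (by simp), aux_card, hL, hF]
  have key := Finset.card_mul_le_card_mul (s := S) (t := T) (m := Q - 1) (n := 1)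
    (fun P v => v ∈ P.1) (by
      intro P hP
      have hP' : P.1 ≤ L := by
        have := (Set.mem_toFinset.mp hP).2
        exact this
      have : Finset.bipartiteAbove (fun (P : ProjPoint F n) v => v ∈ P.1) T P
          = ((P.1 : Set (Fin n → F)) \ {0}).toFinset := by
        ext v
        simp only [Finset.mem_bipartiteAbove, T, Set.mem_toFinset, Set.mem_diff,
          SetLike.mem_coe, Set.mem_singleton_iff]
        constructor
        · rintro ⟨⟨_, h⟩, h2⟩
          exact ⟨h2, h⟩
        · rintro ⟨h2, h⟩
          exact ⟨⟨hP' h2, h⟩, h2⟩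
      rw [this, ← Set.ncard_eq_toFinset_card', Set.ncard_diff_singleton_of_mem (by simp),
        aux_card, P.2, hF, pow_one]) (by
      intro v hv
      have hv0 : v ≠ 0 := (Set.mem_toFinset.mp hv).2
      rw [Finset.card_le_one]
      have h1 : ∀ P : ProjPoint F n, v ∈ P.1 → Submodule.span F {v} = P.1 := by
        intro P hP
        apply Submodule.eq_of_le_of_finrank_eq
        · simpa using hP
        · rw [finrank_span_singleton hv0, P.2]
      intro P hP P' hP'
      have a := h1 P (Finset.mem_bipartiteBelow _ |>.mp hP).2
      have b := h1 P' (Finset.mem_bipartiteBelow _ |>.mp hP').2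
      exact Subtype.ext (a.symm.trans b))
  rw [hS]
  rw [hT] at key
  obtain ⟨k, rfl⟩ : ∃ k, Q = k + 1 := ⟨Q - 1, by omega⟩
  have e : (k + 1) ^ 2 - 1 = (k + 2) * k := by
    have : (k + 1) ^ 2 = (k + 2) * k + 1 := by ring
    omega
  rw [e, mul_one, Nat.add_sub_cancel] at key
  exact Nat.le_of_mul_le_mul_right key (by omega)

open Classical in
lemma aux_count {F : Type} [Field F] [Fintype F] {n Q m : ℕ} (hF : Fintype.card F = Q)
    (V : Set (ProjPoint F n)) (L : Submodule F (Fin n → F)) (hL : finrank F L = 2)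
    (hm : ∀ W : Submodule F (Fin n → F), L ≤ W → finrank F W = 3 → m ≤ secant F n V W) :
    (Q ^ n - Q ^ 2) * (m - secant F n V L) ≤ (V.ncard - secant F n V L) * (Q ^ 3 - Q ^ 2) := by
  haveI : Fintype (ProjPoint F n) := Fintype.ofFinite _
  let S : Finset (ProjPoint F n) := (V \ (V ∩ pointsIn F n L)).toFinset
  let T : Finset (Fin n → F) := ((L : Set (Fin n → F))ᶜ).toFinset
  have hS : S.card = V.ncard - secant F n V L := by
    rw [← Set.ncard_eq_toFinset_card', Set.ncard_diff Set.inter_subset_left (Set.toFinite _)]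
    rfl
  have hT : T.card = Q ^ n - Q ^ 2 := by
    rw [← Set.ncard_eq_toFinset_card', Set.ncard_compl, aux_card, hL, hF]
    simp [hF]
  rw [← hS, ← hT]
  refine Finset.card_mul_le_card_mul (fun v (P : ProjPoint F n) => P.1 ≤ L ⊔ Submodule.span F {v})
    ?_ ?_
  · intro v hv
    have hvL : v ∉ L := Set.mem_toFinset.mp hv
    have hv0 : v ≠ 0 := by
      rintro rfl
      exact hvL L.zero_mem
    have h3 := aux_sup L (Submodule.span F {v}) hL (finrank_span_singleton hv0) (by simpa using hvL)
    have h4 := hm _ le_sup_left h3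
    have : Finset.bipartiteAbove
        (fun v (P : ProjPoint F n) => P.1 ≤ L ⊔ Submodule.span F {v}) S v
        = ((V ∩ pointsIn F n (L ⊔ Submodule.span F {v})) \ (V ∩ pointsIn F n L)).toFinset := by
      ext P
      rw [Finset.mem_bipartiteAbove, Set.mem_toFinset, Set.mem_toFinset]
      constructor
      · rintro ⟨⟨h1, h2⟩, h5⟩
        exact ⟨⟨h1, h5⟩, h2⟩
      · rintro ⟨⟨h1, h5⟩, h2⟩
        exact ⟨⟨h1, h2⟩, h5⟩
    rw [this, ← Set.ncard_eq_toFinset_card', Set.ncard_diff _ (Set.toFinite _)]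
    · exact Nat.sub_le_sub_right h4 _
    · rintro P ⟨h1, h2⟩
      exact ⟨h1, le_trans (show P.1 ≤ L from h2) le_sup_left⟩
  · intro P hP
    have hP' := Set.mem_toFinset.mp hP
    have hPL : ¬ P.1 ≤ L := fun h => hP'.2 ⟨hP'.1, h⟩
    have h3 := aux_sup L P.1 hL P.2 hPL
    have hsub : Finset.bipartiteBelow
        (fun v (P : ProjPoint F n) => P.1 ≤ L ⊔ Submodule.span F {v}) T P
        ⊆ (((L ⊔ P.1 : Submodule F (Fin n → F)) : Set (Fin n → F)) \ L).toFinset := by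
      intro v hv
      obtain ⟨hv1, hv2⟩ := (Finset.mem_bipartiteBelow _).mp hv
      have hvL : v ∉ L := Set.mem_toFinset.mp hv1
      have hv0 : v ≠ 0 := by
        rintro rfl
        exact hvL L.zero_mem
      have h5 := aux_exch L P.1 (Submodule.span F {v}) hL P.2 hPL (finrank_span_singleton hv0)
        (by simpa using hvL) hv2
      rw [Set.mem_toFinset]
      exact ⟨h5 (Submodule.mem_span_singleton_self v), hvL⟩
    refine (Finset.card_le_card hsub).trans ?_
    rw [← Set.ncard_eq_toFinset_card', Set.ncard_diff _ (Set.toFinite _), aux_card, aux_card, h3,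
      hL, hF]
    exact (le_sup_left : L ≤ L ⊔ P.1)

lemma aux_arith (q r v x : ℤ) (k : ℕ) (hq : 2 ≤ q) (hx : x ≤ q ^ 2 + 1)
    (e : ℤ) (he : e = 1 ∨ e = -1)
    (hv : v * (q ^ 2 - 1) = (q ^ (k + 4) + e) * (q ^ (k + 3) - e))
    (h : ((q ^ 2) ^ (k + 4) - (q ^ 2) ^ 2) * (q ^ 3 + q ^ 2 + q + 2 - x) ≤
      (v - x) * ((q ^ 2) ^ 3 - (q ^ 2) ^ 2)) : False := by
  have hA : 1 ≤ q ^ k := one_le_pow₀ (by omega)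
  obtain ⟨A, hAd⟩ : ∃ A, A = q ^ k := ⟨_, rfl⟩
  have e1 : (q ^ 2) ^ (k + 4) = A ^ 2 * q ^ 8 := by rw [hAd]; ring
  have e2 : q ^ (k + 4) = A * q ^ 4 := by rw [hAd]; ring
  have e3 : q ^ (k + 3) = A * q ^ 3 := by rw [hAd]; ring
  rw [e1] at h
  rw [e2, e3] at hv
  rw [← hAd] at hA
  have hq4 : 0 < q ^ 4 := by positivity
  have hee : e * e = 1 := by rcases he with rfl | rfl <;> norm_num
  have h1 : (A ^ 2 * q ^ 4 - 1) * (q ^ 3 + q ^ 2 + q + 2 - x) ≤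
      (A * q ^ 4 + e) * (A * q ^ 3 - e) - x * (q ^ 2 - 1) := by
    rw [← hv]
    refine le_of_mul_le_mul_left ?_ hq4
    linarith
  -- reduce to the extreme value of x
  have hA2 : A ≤ A ^ 2 := by nlinarith
  have h2 : q ^ 2 ≤ A ^ 2 * q ^ 4 := by nlinarith [pow_pos (by omega : 0 < q) 2]
  have h3 : (A ^ 2 * q ^ 4 - 1) * (q ^ 3 + q + 1) ≤
      (A * q ^ 4 + e) * (A * q ^ 3 - e) - (q ^ 2 + 1) * (q ^ 2 - 1) := by
    nlinarith [mul_nonneg (sub_nonneg.2 hx) (sub_nonneg.2 h2)]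
  have h4 : (A * q ^ 4 + e) * (A * q ^ 3 - e) = A ^ 2 * q ^ 7 - e * (A * q ^ 3 * (q - 1)) - 1 := by
    linear_combination (-1) * hee
  have h5 : - e * (A * q ^ 3 * (q - 1)) ≤ A * q ^ 3 * (q - 1) := by
    have : 0 ≤ A * q ^ 3 * (q - 1) :=
      mul_nonneg (mul_nonneg (by omega) (by positivity)) (by omega)
    rcases he with rfl | rfl <;> linarith
  have h6 : A * q ^ 4 ≤ A ^ 2 * q ^ 5 := by
    have a1 : A * q ^ 4 ≤ A ^ 2 * q ^ 4 := by gcongr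
    have a2 : A ^ 2 * q ^ 4 ≤ A ^ 2 * q ^ 4 * q := by
      have : 0 ≤ A ^ 2 * q ^ 4 := by positivity
      nlinarith
    linarith
  have h7 : 0 ≤ A * q ^ 3 := mul_nonneg (by omega) (by positivity)
  have h8 : 0 < A ^ 2 * q ^ 4 := by positivity
  have h9 : q ^ 3 * 2 ≤ q ^ 4 := by nlinarith [pow_pos (by omega : 0 < q) 3]
  have h10 : q ≤ q ^ 3 := by nlinarith [pow_pos (by omega : 0 < q) 2]
  have h11 : (2:ℤ) ^ 3 ≤ q ^ 3 := by gcongr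
  have h12 : (2:ℤ) ^ 2 ≤ q ^ 2 := by gcongr
  linarith

/-- for every line `ℓ` of PG(r, q²) there is a plane through `ℓ`
meeting a quasi-Hermitian variety `V` in at most `q³ + q² + q + 1` points. -/
theorem stmt5 (p h q r : ℕ) (hp : p.Prime) (hh : 1 ≤ h) (hq : q = p ^ h) (hr : 3 ≤ r)
    (F : Type) [Field F] [Fintype F] (hF : Fintype.card F = q ^ 2)
    (V : Set (ProjPoint F (r + 1))) (hV : IsQuasiHermitian F q r V) :
    ∀ ℓ : Submodule F (Fin (r + 1) → F), finrank F ℓ = 2 →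
      ∃ π : Submodule F (Fin (r + 1) → F), ℓ ≤ π ∧ finrank F π = 3 ∧
        secant F (r + 1) V π ≤ q ^ 3 + q ^ 2 + q + 1 := by
  intro ℓ hℓ
  by_contra hcon
  push Not at hcon
  obtain ⟨k, rfl⟩ : ∃ k, r = k + 3 := ⟨r - 3, by omega⟩
  have hq2 : 2 ≤ q := by
    rw [hq]
    exact hp.two_le.trans (Nat.le_self_pow (by omega) p)
  have hx := aux_line hF V ℓ hℓ
  have hc := aux_count (m := q ^ 3 + q ^ 2 + q + 2) hF V ℓ hℓ
    (fun W h1 h2 => hcon W h1 h2)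
  have hxv : secant F (k + 3 + 1) V ℓ ≤ V.ncard :=
    Set.ncard_le_ncard Set.inter_subset_left (Set.toFinite _)
  have hv := hV.1
  refine aux_arith (q : ℤ) 0 (V.ncard : ℤ) (secant F (k + 3 + 1) V ℓ : ℤ) k (by exact_mod_cast hq2)
    (by exact_mod_cast hx) ((-1) ^ (k + 3)) (neg_one_pow_eq_or ℤ _) hv ?_
  have b1 : (q ^ 2) ^ 2 ≤ (q ^ 2) ^ (k + 3 + 1) :=
    Nat.pow_le_pow_right (by positivity) (by omega)
  have b2 : (q ^ 2) ^ 2 ≤ (q ^ 2) ^ 3 := Nat.pow_le_pow_right (by positivity) (by omega)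
  have b3 : secant F (k + 3 + 1) V ℓ ≤ q ^ 3 + q ^ 2 + q + 2 :=
    hx.trans (by nlinarith [Nat.zero_le (q ^ 3)])
  zify [b1, b2, b3, hxv] at hc
  exact hc
end

section
/- Let r ≥ 3 and q = p^h > 4 with p prime, h ≥ 1, and let V be a quasi-Hermitian variety of PG(r,q^2) whose characteristic vector v^V belongs to C_p. Then every line ℓ of PG(r,q^2) satisfies either |ℓ ∩ V| ≤ q+1 or |ℓ ∩ V| ≥ q^2-q+1. -/
/-!
Common framework: `ProjPoint F n` is the set of points of the projective space
PG(n-1, |F|) (so PG(r, q²) corresponds to `n = r + 1` and `Fintype.card F = q ^ 2`).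
Projective subspaces of projective dimension `k` are the submodules of `Fin n → F`
of `finrank` equal to `k + 1`; lines have finrank 2, planes finrank 3 and
hyperplanes finrank `n - 1 = r`.
-/

open Module Matrix

open Polynomial in
theorem core_dvd {F : Type} [Field F] [Fintype F] [DecidableEq F] (f : F → F[X]) (s : ℕ) (y : F) :
    (X - C y) ^ (s - (Finset.univ.filter (fun t => eval y (f t) ≠ 0)).card) ∣
      Matrix.det (Matrix.of fun i j : Fin s => ∑ t : F, C (t ^ (i.1 + j.1)) * f t) := by
  have hM : (fun i j : Fin s => ∑ t : F, C (t ^ (i.1 + j.1)) * f t) =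
      fun i : Fin s => ∑ t : F, (f t * C (t ^ i.1)) • (fun j : Fin s => C (t ^ j.1)) := by
    funext i j
    simp only [Finset.sum_apply, Pi.smul_apply, smul_eq_mul, pow_add, C_mul]
    exact Finset.sum_congr rfl fun t _ => by ring
  have : Matrix.det (Matrix.of fun i j : Fin s => ∑ t : F, C (t ^ (i.1 + j.1)) * f t) =
      ∑ φ : Fin s → F, (∏ i, (f (φ i) * C (φ i ^ i.1))) *
        Matrix.det (Matrix.of fun i j : Fin s => (C (φ i ^ j.1) : F[X])) := by
    rw [hM]
    have h1 := (Matrix.detRowAlternating (R := F[X]) (n := Fin s)).toMultilinearMap.map_sum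
      (fun (i : Fin s) (t : F) => (f t * C (t ^ i.1)) • (fun j : Fin s => (C (t ^ j.1) : F[X])))
    refine h1.trans ?_
    refine Finset.sum_congr rfl fun φ _ => ?_
    exact (Matrix.detRowAlternating (R := F[X]) (n := Fin s)).toMultilinearMap.map_smul_univ
      (fun i => f (φ i) * C (φ i ^ i.1)) (fun i => (fun j : Fin s => (C (φ i ^ j.1) : F[X])))
  rw [this]
  refine Finset.dvd_sum fun φ _ => ?_
  by_cases hφ : Function.Injective φ
  · refine Dvd.dvd.mul_right ?_ _
    rw [Finset.prod_mul_distrib]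
    refine Dvd.dvd.mul_right ?_ _
    set B := Finset.univ.filter (fun i : Fin s => eval y (f (φ i)) = 0) with hB
    have hcard : s - (Finset.univ.filter (fun t => eval y (f t) ≠ 0)).card ≤ B.card := by
      have h1 : (Finset.univ.filter (fun i : Fin s => ¬ eval y (f (φ i)) = 0)).card ≤
          (Finset.univ.filter (fun t => eval y (f t) ≠ 0)).card := by
        refine Finset.card_le_card_of_injOn φ ?_ hφ.injOn
        intro i hi
        simpa using hi
      have h2 := Finset.card_filter_add_card_filter_not (s := (Finset.univ : Finset (Fin s)))
        (fun i : Fin s => eval y (f (φ i)) = 0)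
      simp only [Finset.card_univ, Fintype.card_fin] at h2
      rw [← hB] at h2
      omega
    refine (pow_dvd_pow _ hcard).trans ?_
    refine Dvd.dvd.trans ?_ (Finset.prod_dvd_prod_of_subset B _ _ (Finset.subset_univ _))
    rw [← Finset.prod_const]
    refine Finset.prod_dvd_prod_of_dvd _ _ fun i hi => ?_
    rw [dvd_iff_isRoot]
    simpa [hB] using hi
  · have hz : Matrix.det (Matrix.of fun i j : Fin s => (C (φ i ^ j.1) : F[X])) = 0 := by
      simp only [Function.Injective, not_forall] at hφ
      obtain ⟨a, b, hab, hne⟩ := hφ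
      refine Matrix.det_zero_of_row_eq hne ?_
      funext j
      simp only [Matrix.of_apply]
      rw [hab]
    rw [hz, mul_zero]
    exact dvd_zero _

open Polynomial in
theorem core_ne {F : Type} [Field F] [Fintype F] [DecidableEq F] (f : F → F[X]) (s : ℕ) (y : F)
    (hs : s = (Finset.univ.filter (fun t => eval y (f t) ≠ 0)).card) :
    eval y (Matrix.det (Matrix.of fun i j : Fin s => ∑ t : F, C (t ^ (i.1 + j.1)) * f t)) ≠ 0 := by
  set T := Finset.univ.filter (fun t => eval y (f t) ≠ 0) with hT
  let e : Fin s ≃ T := (finCongr hs).trans T.equivFin.symm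
  let v : Fin s → F := fun i => (e i).1
  have hv : Function.Injective v := Subtype.val_injective.comp e.injective
  have h1 : (Matrix.map (Matrix.of fun i j : Fin s => ∑ t : F, C (t ^ (i.1 + j.1)) * f t)
      (Polynomial.evalRingHom y) : Matrix (Fin s) (Fin s) F) =
      (Matrix.vandermonde v)ᵀ * Matrix.diagonal (fun k => eval y (f (v k))) *
        Matrix.vandermonde v := by
    ext i j
    rw [Matrix.mul_assoc, Matrix.mul_apply]
    simp only [Matrix.map_apply, Matrix.of_apply, coe_evalRingHom, eval_finsetSum, eval_mul, eval_C,
      Matrix.transpose_apply, Matrix.vandermonde_apply, Matrix.diagonal_mul]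
    rw [← Finset.sum_subset (Finset.subset_univ T)
      (fun t _ ht => by
        have : eval y (f t) = 0 := by simpa [hT] using ht
        rw [this, mul_zero]),
      ← Finset.sum_coe_sort T, ← e.sum_comp]
    refine Finset.sum_congr rfl fun k _ => ?_
    simp only [v]
    ring
  have h2 : eval y (Matrix.det (Matrix.of fun i j : Fin s => ∑ t : F, C (t ^ (i.1 + j.1)) * f t)) =
    Matrix.det (Matrix.map (Matrix.of fun i j : Fin s => ∑ t : F, C (t ^ (i.1 + j.1)) * f t)
      (Polynomial.evalRingHom y) : Matrix (Fin s) (Fin s) F) :=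
    RingHom.map_det (Polynomial.evalRingHom y) _
  rw [h2, h1, Matrix.det_mul, Matrix.det_mul, Matrix.det_transpose, Matrix.det_diagonal]
  have h3 : (Matrix.vandermonde v).det ≠ 0 := Matrix.det_vandermonde_ne_zero_iff.mpr hv
  refine mul_ne_zero (mul_ne_zero h3 (Finset.prod_ne_zero_iff.mpr fun k _ => ?_)) h3
  exact (Finset.mem_filter.mp (e k).2).2

open Polynomial in
theorem core_deg {F : Type} [Field F] [Fintype F] (f : F → F[X]) (s : ℕ)
    (hf : ∀ k, (∑ t : F, C (t ^ k) * f t).natDegree ≤ k) :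
    (Matrix.det (Matrix.of fun i j : Fin s => ∑ t : F, C (t ^ (i.1 + j.1)) * f t)).natDegree
      ≤ s * (s - 1) := by
  rw [Matrix.det_apply]
  refine natDegree_sum_le_of_forall_le _ _ fun σ _ => ?_
  refine (natDegree_smul_le _ _).trans ?_
  refine (natDegree_prod_le _ _).trans ?_
  refine (Finset.sum_le_sum (fun i _ => hf _)).trans ?_
  rw [Finset.sum_add_distrib, Equiv.sum_comp σ (fun i : Fin s => i.1),
    Fin.sum_univ_eq_sum_range (fun i => i) s, ← Finset.sum_range_id_mul_two]
  omega

open Polynomial in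
theorem core_ineq {F : Type} [Field F] [Fintype F] [DecidableEq F] (f : F → F[X])
    (hf : ∀ k, (∑ t : F, C (t ^ k) * f t).natDegree ≤ k) (y0 : F) (s : ℕ)
    (hs : s = (Finset.univ.filter (fun t => eval y0 (f t) ≠ 0)).card) :
    s * (Fintype.card F - s) ≤ ∑ y ∈ Finset.univ.erase y0,
      (Finset.univ.filter (fun t => eval y (f t) ≠ 0)).card := by
  set N : F → ℕ := fun y => (Finset.univ.filter (fun t => eval y (f t) ≠ 0)).card with hN
  set D := Matrix.det (Matrix.of fun i j : Fin s => ∑ t : F, C (t ^ (i.1 + j.1)) * f t) with hD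
  have hD0 : D ≠ 0 := fun h => core_ne f s y0 hs (by rw [← hD, h, eval_zero])
  have hdvd : (∏ y : F, (X - C y) ^ (s - N y)) ∣ D := by
    refine Finset.prod_dvd_of_coprime (fun a _ b _ hab => ?_) (fun y _ => core_dvd f s y)
    exact (isCoprime_X_sub_C_of_isUnit_sub (sub_ne_zero.mpr hab).isUnit).pow
  have h1 := (natDegree_le_of_dvd hdvd hD0).trans (core_deg f s hf)
  rw [natDegree_prod_of_monic _ _ (fun y _ => (monic_X_sub_C y).pow _)] at h1
  simp only [natDegree_pow, natDegree_X_sub_C, mul_one] at h1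
  have h2 : Fintype.card F * s ≤ ∑ y : F, (s - N y) + ∑ y : F, N y := by
    rw [← Finset.sum_add_distrib]
    calc Fintype.card F * s = ∑ y : F, s := by simp
      _ ≤ _ := Finset.sum_le_sum fun y _ => by omega
  have h3 : ∑ y : F, N y = ∑ y ∈ Finset.univ.erase y0, N y + N y0 :=
    (Finset.sum_erase_add _ _ (Finset.mem_univ _)).symm
  have h4 : N y0 = s := hs.symm
  change s * (Fintype.card F - s) ≤ ∑ y ∈ Finset.univ.erase y0, N y
  have hsQ : s ≤ Fintype.card F := by rw [hs]; exact Finset.card_le_univ _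
  obtain ⟨d, hd⟩ := Nat.exists_eq_add_of_le hsQ
  rw [hd, Nat.add_sub_cancel_left]
  rw [hd] at h2
  rcases s with _ | s
  · simp
  · simp only [Nat.add_sub_cancel] at h1
    nlinarith

open Polynomial in
theorem gen_deg {F : Type} [Field F] [Fintype F] (α β γ : F) (k : ℕ) :
    (∑ t : F, C (t ^ k) * (1 - (C α + C t * C β + X * C γ) ^ (Fintype.card F - 1))).natDegree
      ≤ k := by
  classical
  have h : ∑ t : F, C (t ^ k) * (1 - (C α + C t * C β + X * C γ) ^ (Fintype.card F - 1)) =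
      C (∑ t : F, t ^ k) - ∑ m ∈ Finset.range (Fintype.card F - 1 + 1),
        C (∑ t : F, t ^ (k + m)) * (C (β ^ m * ((Fintype.card F - 1).choose m : F)) *
          (C α + X * C γ) ^ (Fintype.card F - 1 - m)) := by
    simp only [mul_sub, mul_one, Finset.sum_sub_distrib, map_sum, Finset.sum_mul]
    congr 1
    rw [Finset.sum_comm]
    refine Finset.sum_congr rfl fun t _ => ?_
    rw [show C α + C t * C β + X * C γ = C t * C β + (C α + X * C γ) by ring, add_pow,
      Finset.mul_sum]
    refine Finset.sum_congr rfl fun m _ => ?_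
    simp only [C_mul, C_pow, map_natCast, pow_add]
    ring
  rw [h]
  refine (natDegree_sub_le _ _).trans (max_le (by rw [natDegree_C]; exact Nat.zero_le _) ?_)
  refine natDegree_sum_le_of_forall_le _ _ fun m hm => ?_
  by_cases hk : k + m < Fintype.card F - 1
  · rw [FiniteField.sum_pow_lt_card_sub_one F _ hk]; simp
  · refine (natDegree_C_mul_le _ _).trans ((natDegree_C_mul_le _ _).trans ?_)
    refine natDegree_pow_le.trans ?_
    have : (C α + X * C γ : F[X]).natDegree ≤ 1 := by
      compute_degree
    calc _ ≤ (Fintype.card F - 1 - m) * 1 := Nat.mul_le_mul_left _ this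
      _ ≤ k := by omega

/-- The point spanned by a nonzero vector. -/
def mkPt {F : Type} [Field F] {n : ℕ} (v : Fin n → F) (hv : v ≠ 0) : ProjPoint F n :=
  ⟨Submodule.span F {v}, finrank_span_singleton hv⟩

theorem mkPt_mem_pointsIn {F : Type} [Field F] {n : ℕ} (v : Fin n → F) (hv : v ≠ 0)
    (W : Submodule F (Fin n → F)) : mkPt v hv ∈ pointsIn F n W ↔ v ∈ W :=
  Submodule.span_singleton_le_iff_mem v W

theorem mkPt_eq {F : Type} [Field F] {n : ℕ} (v : Fin n → F) (hv : v ≠ 0)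
    (P : ProjPoint F n) (h : v ∈ P.1) : mkPt v hv = P := by
  refine Subtype.ext ?_
  refine Submodule.eq_of_le_of_finrank_eq ((Submodule.span_singleton_le_iff_mem v P.1).mpr h) ?_
  rw [P.2]
  exact finrank_span_singleton hv

/-- Span of the functions `1 - φ ^ (Q-1)` for linear functionals `φ`. -/
def polyFn (F : Type) [Field F] [Fintype F] (n : ℕ) : Submodule F ((Fin n → F) → F) :=
  Submodule.span F {g | ∃ φ : (Fin n → F) →ₗ[F] F, g = fun v => 1 - φ v ^ (Fintype.card F - 1)}

open Polynomial in
theorem polyFn_slice {F : Type} [Field F] [Fintype F] {n : ℕ} (G : (Fin n → F) → F)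
    (hG : G ∈ polyFn F n) (a b w : Fin n → F) :
    ∃ f : F → F[X], (∀ t y, eval y (f t) = G (a + t • b + y • w)) ∧
      ∀ k, (∑ t : F, C (t ^ k) * f t).natDegree ≤ k := by
  refine Submodule.span_induction (p := fun G _ => ∃ f : F → F[X],
    (∀ t y, eval y (f t) = G (a + t • b + y • w)) ∧
      ∀ k, (∑ t : F, C (t ^ k) * f t).natDegree ≤ k) ?_ ?_ ?_ ?_ hG
  · rintro _ ⟨φ, rfl⟩
    refine ⟨fun t => 1 - (C (φ a) + C t * C (φ b) + X * C (φ w)) ^ (Fintype.card F - 1), ?_,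
      fun k => gen_deg _ _ _ k⟩
    intro t y
    simp [mul_comm (φ w) y]
  · exact ⟨fun _ => 0, by simp, by simp⟩
  · rintro G₁ G₂ _ _ ⟨f₁, h₁, d₁⟩ ⟨f₂, h₂, d₂⟩
    refine ⟨fun t => f₁ t + f₂ t, fun t y => by simp [h₁, h₂], fun k => ?_⟩
    simp only [mul_add, Finset.sum_add_distrib]
    exact (natDegree_add_le _ _).trans (max_le (d₁ k) (d₂ k))
  · rintro c G₁ _ ⟨f₁, h₁, d₁⟩
    refine ⟨fun t => C c * f₁ t, fun t y => by simp [h₁], fun k => ?_⟩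
    have : ∑ t : F, C (t ^ k) * (C c * f₁ t) = C c * ∑ t : F, C (t ^ k) * f₁ t := by
      rw [Finset.mul_sum]
      exact Finset.sum_congr rfl fun t _ => by ring
    rw [this]
    exact (natDegree_C_mul_le _ _).trans (d₁ k)

theorem one_sub_pow_card {F : Type} [Field F] [Fintype F] [DecidableEq F] (x : F) :
    1 - x ^ (Fintype.card F - 1) = if x = 0 then 1 else 0 := by
  split_ifs with h
  · have : Fintype.card F - 1 ≠ 0 := by
      have := Fintype.one_lt_card (α := F); omega
    simp [h, this]
  · rw [FiniteField.pow_card_sub_one_eq_one x h, sub_self]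

theorem polyFn_sum {F : Type} [Field F] [Fintype F] {n : ℕ} (G : (Fin n → F) → F)
    (hG : G ∈ polyFn F n) (W : Submodule F (Fin n → F)) [Fintype W] (hW : 2 ≤ finrank F W) :
    ∑ v : W, G v = 0 := by
  classical
  refine Submodule.span_induction (p := fun G _ => ∑ v : W, G v = 0) ?_ ?_ ?_ ?_ hG
  · rintro _ ⟨φ, rfl⟩
    simp only [one_sub_pow_card]
    rw [Finset.sum_boole]
    have h1 : (Finset.univ.filter (fun v : W => φ v = 0)).card =
        Nat.card (LinearMap.ker (φ.comp W.subtype)) := by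
      rw [← Fintype.card_subtype, Nat.card_eq_fintype_card]
      exact Fintype.card_congr (Equiv.subtypeEquivRight fun v => by simp)
    have h2 : 1 ≤ finrank F (LinearMap.ker (φ.comp W.subtype)) := by
      have h3 := LinearMap.finrank_range_add_finrank_ker (φ.comp W.subtype)
      have h4 := Submodule.finrank_le (LinearMap.range (φ.comp W.subtype))
      rw [Module.finrank_self] at h4
      omega
    rw [h1, Nat.card_eq_fintype_card, Module.card_eq_pow_finrank (K := F)]
    push_cast
    rw [Nat.cast_card_eq_zero]
    exact zero_pow (by omega)
  · simp
  · intro G₁ G₂ _ _ h₁ h₂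
    simp [Finset.sum_add_distrib, h₁, h₂]
  · intro c G₁ _ h₁
    simp [← Finset.mul_sum, h₁]

theorem code_polyFn {F : Type} [Field F] [Fintype F] {p n : ℕ} [CharP F p] (hn : 1 ≤ n)
    (c : ProjPoint F n → ZMod p) (hc : c ∈ hypCode F p n) :
    ∃ G ∈ polyFn F n, ∀ (v : Fin n → F) (hv : v ≠ 0),
      G v = ZMod.castHom dvd_rfl F (c (mkPt v hv)) := by
  classical
  refine Submodule.span_induction (p := fun c _ => ∃ G ∈ polyFn F n,
    ∀ (v : Fin n → F) (hv : v ≠ 0),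
      G v = ZMod.castHom dvd_rfl F (c (mkPt v hv)))
    ?_ ?_ ?_ ?_ hc
  · rintro _ ⟨H, hH, rfl⟩
    have hlt : H < ⊤ := by
      refine lt_top_iff_ne_top.mpr ?_
      rintro rfl
      rw [finrank_top, Module.finrank_fin_fun] at hH
      omega
    obtain ⟨φ, hφ, hle⟩ := Submodule.exists_le_ker_of_lt_top H hlt
    have hker : H = LinearMap.ker φ := by
      refine Submodule.eq_of_le_of_finrank_le hle ?_
      have h3 := LinearMap.finrank_range_add_finrank_ker φ
      rw [Module.finrank_fin_fun] at h3
      have h4 : 1 ≤ finrank F (LinearMap.range φ) := by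
        rw [Nat.one_le_iff_ne_zero]
        intro h
        rw [Submodule.finrank_eq_zero, LinearMap.range_eq_bot] at h
        exact hφ h
      omega
    refine ⟨_, Submodule.subset_span ⟨φ, rfl⟩, fun v hv => ?_⟩
    rw [one_sub_pow_card]
    have hmem : mkPt v hv ∈
        pointsIn F n H ↔ φ v = 0 := by
      rw [mkPt_mem_pointsIn, hker, LinearMap.mem_ker]
    unfold charVec
    by_cases h : φ v = 0
    · rw [Set.indicator_of_mem (hmem.mpr h)]
      simp [h]
    · rw [Set.indicator_of_notMem (fun h' => h (hmem.mp h'))]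
      simp [h]
  · exact ⟨0, Submodule.zero_mem _, fun v hv => by simp⟩
  · rintro c₁ c₂ _ _ ⟨G₁, m₁, h₁⟩ ⟨G₂, m₂, h₂⟩
    refine ⟨G₁ + G₂, Submodule.add_mem _ m₁ m₂, fun v hv => ?_⟩
    simp only [Pi.add_apply, map_add, h₁ v hv, h₂ v hv]
  · rintro z c₁ _ ⟨G₁, m₁, h₁⟩
    refine ⟨ZMod.castHom dvd_rfl F z • G₁, Submodule.smul_mem _ _ m₁, fun v hv => ?_⟩
    simp only [Pi.smul_apply, smul_eq_mul, map_mul, h₁ v hv]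

/-- Nonzero vectors spanning a point of `V`. -/
def inV {F : Type} [Field F] {n : ℕ} (V : Set (ProjPoint F n)) (v : Fin n → F) : Prop :=
  ∃ hv : v ≠ 0, mkPt v hv ∈ V

theorem inV_smul {F : Type} [Field F] {n : ℕ} (V : Set (ProjPoint F n)) (v : Fin n → F)
    (c : F) (hc : c ≠ 0) : inV V (c • v) ↔ inV V v := by
  have h : ∀ (h1 : c • v ≠ 0) (h2 : v ≠ 0), mkPt (c • v) h1 = mkPt v h2 := fun h1 h2 =>
    mkPt_eq _ _ _ (Submodule.smul_mem _ c (Submodule.mem_span_singleton_self v))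
  constructor
  · rintro ⟨h1, h2⟩
    have h0 : v ≠ 0 := fun h => h1 (by simp [h])
    exact ⟨h0, h h1 h0 ▸ h2⟩
  · rintro ⟨h1, h2⟩
    exact ⟨smul_ne_zero hc h1, (h (smul_ne_zero hc h1) h1).symm ▸ h2⟩

open Classical in
theorem card_inV {F : Type} [Field F] [Fintype F] {n : ℕ} (V : Set (ProjPoint F n))
    (W : Submodule F (Fin n → F)) :
    (Finset.univ.filter (fun v => inV V v ∧ v ∈ W)).card =
      (Fintype.card F - 1) * secant F n V W := by
  have : Finite (ProjPoint F n) := by unfold ProjPoint; infer_instance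
  have : Fintype (ProjPoint F n) := Fintype.ofFinite _
  have hU : Finset.univ.filter (fun v => inV V v ∧ v ∈ W) =
      (V ∩ pointsIn F n W).toFinset.biUnion
        (fun P => Finset.univ.filter (fun v => v ∈ P.1 ∧ v ≠ 0)) := by
    ext v
    simp only [Finset.mem_filter, Finset.mem_univ, true_and, Finset.mem_biUnion,
      Set.mem_toFinset]
    constructor
    · rintro ⟨⟨h0, hV⟩, hW⟩
      exact ⟨_, ⟨hV, (mkPt_mem_pointsIn v h0 W).mpr hW⟩, Submodule.mem_span_singleton_self v, h0⟩
    · rintro ⟨P, ⟨hV, hW⟩, hv, h0⟩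
      refine ⟨⟨h0, ?_⟩, hW hv⟩
      rw [mkPt_eq v h0 P hv]
      exact hV
  rw [hU, Finset.card_biUnion]
  · rw [Finset.sum_congr rfl (g := fun _ => Fintype.card F - 1), Finset.sum_const, smul_eq_mul,
      mul_comm, secant, Set.ncard_eq_toFinset_card']
    intro P _
    have h1 : (Finset.univ.filter (fun v : Fin n → F => v ∈ P.1 ∧ v ≠ 0)) =
      (Finset.univ.filter (fun v : Fin n → F => v ∈ P.1)).erase 0 := by
      ext v; simp [and_comm]
    rw [h1, Finset.card_erase_of_mem (by simp), ← Fintype.card_subtype]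
    have h2 : Fintype.card {x // x ∈ P.1} = _ := Module.card_eq_pow_finrank (K := F) (V := P.1)
    rw [P.2, pow_one] at h2
    rw [← h2]
  · intro P _ P' _ hne
    refine Finset.disjoint_left.mpr fun v h h' => hne ?_
    simp only [Finset.mem_filter, Finset.mem_univ, true_and] at h h'
    rw [← mkPt_eq v h.2 P h.1, ← mkPt_eq v h.2 P' h'.1]

theorem double_count {F : Type} [Field F] [Fintype F] [DecidableEq F] {n : ℕ}
    (A : (Fin n → F) → Prop) [DecidablePred A] (ℓ : Submodule F (Fin n → F))
    [DecidablePred (· ∈ ℓ)] (a b : Fin n → F) (ha : a ∈ ℓ) (hb : b ∈ ℓ) :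
    ∑ w ∈ Finset.univ.filter (fun w : Fin n → F => w ∉ ℓ), ∑ y ∈ Finset.univ.erase (0 : F),
      (Finset.univ.filter (fun t : F => A (a + t • b + y • w))).card =
    (Fintype.card F - 1) * (Fintype.card F *
      (Finset.univ.filter (fun v => A v ∧ v ∉ ℓ)).card) := by
  rw [Finset.sum_comm]
  rw [Finset.sum_congr rfl (g := fun _ => Fintype.card F *
      (Finset.univ.filter (fun v => A v ∧ v ∉ ℓ)).card), Finset.sum_const, smul_eq_mul,
      Finset.card_erase_of_mem (Finset.mem_univ _), Finset.card_univ]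
  intro y hy
  have hy0 : y ≠ 0 := Finset.ne_of_mem_erase hy
  simp only [Finset.card_filter (fun t : F => A _)]
  rw [Finset.sum_comm, Finset.sum_congr rfl (g := fun _ =>
      (Finset.univ.filter (fun v => A v ∧ v ∉ ℓ)).card), Finset.sum_const, smul_eq_mul,
      Finset.card_univ]
  intro t _
  rw [← Finset.card_filter, Finset.filter_filter]
  have hab : a + t • b ∈ ℓ := ℓ.add_mem ha (ℓ.smul_mem t hb)
  refine Finset.card_nbij' (fun w => a + t • b + y • w) (fun v => y⁻¹ • (v - (a + t • b)))
    ?_ ?_ ?_ ?_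
  · intro w hw
    simp only [Finset.coe_filter, Finset.mem_univ, true_and, Set.mem_ofPred_eq] at hw ⊢
    refine ⟨hw.2, fun h => hw.1 ?_⟩
    exact (Submodule.smul_mem_iff ℓ hy0).mp ((Submodule.add_mem_iff_right ℓ hab).mp h)
  · intro v hv
    simp only [Finset.coe_filter, Finset.mem_univ, true_and, Set.mem_ofPred_eq] at hv ⊢
    rw [smul_inv_smul₀ hy0, add_sub_cancel]
    refine ⟨fun h => hv.2 ?_, hv.1⟩
    exact (Submodule.sub_mem_iff_left ℓ hab).mp
      ((Submodule.smul_mem_iff ℓ (inv_ne_zero hy0)).mp h)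
  · intro w _
    simp [inv_smul_smul₀ hy0]
  · intro v _
    simp [smul_inv_smul₀ hy0]

theorem exists_basis {F : Type} [Field F] {n : ℕ}
    (ℓ : Submodule F (Fin n → F)) (hℓ : finrank F ℓ = 2) (b : Fin n → F) (hb : b ∈ ℓ)
    (hb0 : b ≠ 0) : ∃ a ∈ ℓ, (∀ α β : F, α • a + β • b = 0 → α = 0 ∧ β = 0) ∧
      ∀ v ∈ ℓ, ∃ α β : F, α • a + β • b = v := by
  have h1 : ∃ a ∈ ℓ, a ∉ Submodule.span F {b} := by
    by_contra! h
    have := Submodule.finrank_mono (show ℓ ≤ Submodule.span F {b} from h)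
    rw [hℓ, finrank_span_singleton hb0] at this
    omega
  obtain ⟨a, ha, hab⟩ := h1
  have hli : ∀ α β : F, α • a + β • b = 0 → α = 0 ∧ β = 0 := by
    intro α β h
    have hα : α = 0 := by
      by_contra hα
      refine hab (Submodule.mem_span_singleton.mpr ⟨-(α⁻¹ * β), ?_⟩)
      have : a = α⁻¹ • (α • a + β • b) - (α⁻¹ * β) • b := by
        rw [smul_add, inv_smul_smul₀ hα, smul_smul]; abel
      rw [this, h]; simp
    subst hα
    simpa [hb0] using h
  refine ⟨a, ha, hli, ?_⟩
  have hlin : LinearIndependent F ![a, b] := LinearIndependent.pair_iff.mpr hli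
  have hspan : Submodule.span F {a, b} = ℓ := by
    refine Submodule.eq_of_le_of_finrank_eq ?_ ?_
    · rw [Submodule.span_le]
      rintro x (rfl | rfl) <;> assumption
    · have := finrank_span_eq_card hlin
      rw [hℓ]
      rw [Matrix.range_cons, Matrix.range_cons, Matrix.range_empty, Set.union_empty,
        Set.singleton_union, Fintype.card_fin] at this
      exact this
  intro v hv
  rw [← hspan] at hv
  exact Submodule.mem_span_pair.mp hv

open Classical in
theorem line_count {F : Type} [Field F] [Fintype F] {n : ℕ}
    (A : (Fin n → F) → Prop) (hA0 : ¬ A 0) (hA : ∀ v (c : F), c ≠ 0 → (A (c • v) ↔ A v))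
    (ℓ : Submodule F (Fin n → F)) (a b : Fin n → F) (ha : a ∈ ℓ) (hb : b ∈ ℓ)
    (hli : ∀ α β : F, α • a + β • b = 0 → α = 0 ∧ β = 0)
    (hsp : ∀ v ∈ ℓ, ∃ α β : F, α • a + β • b = v) :
    (Finset.univ.filter (fun v => A v ∧ v ∈ ℓ)).card =
      (Fintype.card F - 1) * ((Finset.univ.filter (fun t : F => A (a + t • b))).card +
        if A b then 1 else 0) := by
  have h1 : (Finset.univ.filter (fun v => A v ∧ v ∈ ℓ)).card =
      (Finset.univ.filter (fun z : F × F => A (z.1 • a + z.2 • b))).card := by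
    symm
    refine Finset.card_bij (fun z _ => z.1 • a + z.2 • b) ?_ ?_ ?_
    · intro z hz
      simp only [Finset.mem_filter, Finset.mem_univ, true_and] at hz ⊢
      exact ⟨hz, ℓ.add_mem (ℓ.smul_mem _ ha) (ℓ.smul_mem _ hb)⟩
    · intro z _ z' _ h
      have := hli (z.1 - z'.1) (z.2 - z'.2) (by
        have h' : z.1 • a + z.2 • b - (z'.1 • a + z'.2 • b) = 0 := sub_eq_zero.mpr h
        rw [← h', sub_smul, sub_smul]; abel)
      exact Prod.ext (sub_eq_zero.mp this.1) (sub_eq_zero.mp this.2)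
    · intro v hv
      simp only [Finset.mem_filter, Finset.mem_univ, true_and] at hv
      obtain ⟨α, β, rfl⟩ := hsp v hv.2
      exact ⟨(α, β), by simpa using hv.1, rfl⟩
  rw [h1, Finset.card_filter, Fintype.sum_prod_type]
  simp only [← Finset.card_filter]
  rw [← Finset.add_sum_erase _ _ (Finset.mem_univ (0 : F))]
  rw [Finset.sum_congr rfl (g := fun _ => (Finset.univ.filter (fun t : F => A (a + t • b))).card),
    Finset.sum_const, smul_eq_mul, Finset.card_erase_of_mem (Finset.mem_univ _), Finset.card_univ,
    mul_add, add_comm]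
  · congr 1
    by_cases h : A b
    · rw [if_pos h, mul_one, ← Finset.card_univ, ← Finset.card_erase_of_mem (Finset.mem_univ (0 : F))]
      congr 1
      ext β
      by_cases hβ : β = 0
      · simp [hβ, hA0]
      · simp [hβ, hA b β hβ, h]
    · rw [if_neg h, mul_zero, Finset.card_eq_zero]
      ext β
      by_cases hβ : β = 0
      · simp [hβ, hA0]
      · simp [hA b β hβ, h]
  · intro α hα
    have hα0 : α ≠ 0 := Finset.ne_of_mem_erase hα
    refine Finset.card_nbij' (fun β => α⁻¹ * β) (fun t => α * t) ?_ ?_ ?_ ?_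
    · intro β hβ
      simp only [Finset.coe_filter, Finset.mem_univ, true_and, Set.mem_ofPred_eq] at hβ ⊢
      rw [← hA _ α hα0, smul_add, smul_smul, mul_inv_cancel_left₀ hα0]
      exact hβ
    · intro t ht
      simp only [Finset.coe_filter, Finset.mem_univ, true_and, Set.mem_ofPred_eq] at ht ⊢
      rw [← smul_smul, ← smul_add, hA _ α hα0]
      exact ht
    · intro β _
      simp [hα0]
    · intro β _
      simp [hα0]

open Classical in
theorem secant_mod {F : Type} [Field F] [Fintype F] {n : ℕ} (G : (Fin n → F) → F)
    (hGm : G ∈ polyFn F n) (V : Set (ProjPoint F n))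
    (hGV : ∀ v : Fin n → F, v ≠ 0 → G v = if inV V v then 1 else 0)
    (W : Submodule F (Fin n → F)) (hW : 2 ≤ finrank F W) :
    (secant F n V W : F) = G 0 := by
  have h1 := polyFn_sum G hGm W hW
  have h2 : ∑ v : W, G v = ∑ v ∈ Finset.univ.filter (fun v => v ∈ W), G v :=
    (Finset.sum_subtype _ (by simp) G).symm
  rw [h2, ← Finset.add_sum_erase _ _ (show (0 : Fin n → F) ∈ _ by simp),
    Finset.sum_congr rfl (g := fun v => if inV V v then (1 : F) else 0)
      (fun v hv => hGV v (Finset.ne_of_mem_erase hv)), Finset.sum_boole] at h1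
  have h3 : ((Finset.univ.filter (fun v => v ∈ W)).erase 0).filter (fun v => inV V v) =
      Finset.univ.filter (fun v => inV V v ∧ v ∈ W) := by
    ext v
    simp only [Finset.mem_filter, Finset.mem_univ, true_and, Finset.mem_erase]
    exact ⟨fun h => ⟨h.2, h.1.2⟩, fun h => ⟨⟨h.1.1, h.2⟩, h.1⟩⟩
  rw [h3, card_inV, Nat.cast_mul, Nat.cast_sub Fintype.card_pos, Nat.cast_card_eq_zero] at h1
  push_cast at h1
  linear_combination -h1

open Classical in
theorem main_ineq {F : Type} [Field F] [Fintype F] {n : ℕ} (G : (Fin n → F) → F)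
    (hGm : G ∈ polyFn F n) (V : Set (ProjPoint F n))
    (hGV : ∀ v : Fin n → F, v ≠ 0 → G v = if inV V v then 1 else 0)
    (ℓ : Submodule F (Fin n → F)) (hℓ : finrank F ℓ = 2) (b : Fin n → F) (hb : b ∈ ℓ)
    (hb0 : b ≠ 0) :
    ∃ s, s + (if inV V b then 1 else 0) = secant F n V ℓ ∧
      s * (Fintype.card F - s) * (Fintype.card F ^ n - Fintype.card F ^ 2) ≤
      (Fintype.card F - 1) * (Fintype.card F * ((Fintype.card F - 1) * secant F n V ⊤)) := by
  obtain ⟨a, ha, hli, hsp⟩ := exists_basis ℓ hℓ b hb hb0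
  have hQ : 0 < Fintype.card F - 1 := by
    have := Fintype.one_lt_card (α := F); omega
  refine ⟨(Finset.univ.filter (fun t : F => inV V (a + t • b))).card, ?_, ?_⟩
  · have h1 := line_count (inV V) (fun h => h.1 rfl) (fun v c hc => inV_smul V v c hc) ℓ a b ha hb
      hli hsp
    rw [card_inV] at h1
    exact (Nat.eq_of_mul_eq_mul_left hQ h1).symm
  · set s := (Finset.univ.filter (fun t : F => inV V (a + t • b))).card with hs
    have hw : ∀ w ∈ Finset.univ.filter (fun w : Fin n → F => w ∉ ℓ),
        s * (Fintype.card F - s) ≤ ∑ y ∈ Finset.univ.erase (0 : F),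
          (Finset.univ.filter (fun t : F => inV V (a + t • b + y • w))).card := by
      intro w hw
      have hwℓ : w ∉ ℓ := (Finset.mem_filter.mp hw).2
      obtain ⟨f, hf, hd⟩ := polyFn_slice G hGm a b w
      have hne : ∀ t y : F, a + t • b + y • w ≠ 0 := by
        intro t y h
        have hab : a + t • b ∈ ℓ := ℓ.add_mem ha (ℓ.smul_mem t hb)
        by_cases hy : y = 0
        · subst hy
          have := (hli 1 t (by simpa using h)).1
          exact one_ne_zero this
        · have h0 : a + t • b + y • w ∈ ℓ := by rw [h]; exact ℓ.zero_mem
          exact hwℓ ((Submodule.smul_mem_iff ℓ hy).mp ((Submodule.add_mem_iff_right ℓ hab).mp h0))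
      have hiff : ∀ t y : F, Polynomial.eval y (f t) ≠ 0 ↔ inV V (a + t • b + y • w) := by
        intro t y
        rw [hf, hGV _ (hne t y)]
        by_cases h : inV V (a + t • b + y • w) <;> simp [h]
      have := core_ineq f hd 0 s (by simp only [hiff, zero_smul, add_zero]; rfl)
      simpa only [hiff] using this
    have h1 := Finset.card_nsmul_le_sum _ _ _ hw
    rw [double_count (inV V) ℓ a b ha hb, smul_eq_mul] at h1
    have h2 : (Finset.univ.filter (fun w : Fin n → F => w ∉ ℓ)).card =
        Fintype.card F ^ n - Fintype.card F ^ 2 := by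
      have h3 := Finset.card_filter_add_card_filter_not (s := (Finset.univ : Finset (Fin n → F)))
        (fun w => w ∈ ℓ)
      have h4 : Fintype.card ℓ = _ := Module.card_eq_pow_finrank (K := F) (V := ℓ)
      rw [hℓ] at h4
      rw [Finset.card_univ, Fintype.card_pi_const, ← Fintype.card_subtype] at h3
      have h5 : Fintype.card {w // w ∈ ℓ} = Fintype.card F ^ 2 := by rw [← h4]
      omega
    rw [h2, mul_comm] at h1
    refine h1.trans ?_
    refine Nat.mul_le_mul_left _ (Nat.mul_le_mul_left _ ?_)
    rw [← card_inV]
    refine Finset.card_le_card fun v hv => ?_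
    simp only [Finset.mem_filter, Finset.mem_univ, true_and] at hv ⊢
    exact ⟨hv.1, trivial⟩

theorem final_arith (q s z N e : ℤ) (hq : 5 ≤ q) (hz : q ^ 3 ≤ z) (he : e = 1 ∨ e = -1)
    (hs1 : q + 2 ≤ s) (hs2 : s + q + 2 ≤ q ^ 2)
    (hN : N * (q ^ 2 - 1) = (z * q + e) * (z - e))
    (h : s * (q ^ 2 - s) * (z * z * q ^ 2 - (q ^ 2) ^ 2) ≤
      (q ^ 2 - 1) * (q ^ 2 * ((q ^ 2 - 1) * N))) : False := by
  have h1 : q ^ 3 + 1 ≤ s * (q ^ 2 - s) := by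
    have := mul_nonneg (sub_nonneg.mpr hs1) (sub_nonneg.mpr hs2)
    nlinarith
  have hq3 : 25 * q ≤ q ^ 3 := by nlinarith
  have hq30 : 0 < q ^ 3 := by positivity
  have hzz : q ^ 3 * q ^ 3 ≤ z * z := mul_le_mul hz hz hq30.le (by linarith)
  have hq6 : q ^ 2 ≤ q ^ 3 * q ^ 3 := by
    rw [← pow_add]; exact pow_le_pow_right₀ (by linarith) (by norm_num)
  have h2 : (q ^ 3 + 1) * (q ^ 2 * (z * z - q ^ 2)) ≤ q ^ 2 * ((q ^ 2 - 1) * ((z * q + e) * (z - e))) := by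
    have h3 : 0 ≤ q ^ 2 * (z * z - q ^ 2) := mul_nonneg (by positivity) (by linarith)
    have h4 := mul_le_mul_of_nonneg_right h1 h3
    have h5 : s * (q ^ 2 - s) * (q ^ 2 * (z * z - q ^ 2)) =
      s * (q ^ 2 - s) * (z * z * q ^ 2 - (q ^ 2) ^ 2) := by ring
    rw [← hN]
    calc _ ≤ _ := h4
      _ = _ := h5
      _ ≤ _ := h
      _ = _ := by ring
  have h6 : (q ^ 3 + 1) * (z * z - q ^ 2) ≤ (q ^ 2 - 1) * ((z * q + e) * (z - e)) := by
    refine le_of_mul_le_mul_left ?_ (show 0 < q ^ 2 by positivity)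
    linarith
  have h7 : (z * q + e) * (z - e) ≤ z * z * q + z * q - z - 1 := by
    rcases he with rfl | rfl
    · nlinarith
    · nlinarith
  have h8 : (q ^ 2 - 1) * ((z * q + e) * (z - e)) ≤ (q ^ 2 - 1) * (z * z * q + z * q - z - 1) :=
    mul_le_mul_of_nonneg_left h7 (by nlinarith)
  have h9 : z * q ^ 3 ≤ z * z := mul_le_mul_of_nonneg_left hz (by linarith)
  have h10 : q ^ 5 + 1 ≤ z * z * q := by
    have : q ^ 3 * q ^ 3 * q ≤ z * z * q := mul_le_mul_of_nonneg_right hzz (by linarith)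
    have h11 : q ^ 5 + 1 ≤ q ^ 7 := by
      have : (1:ℤ) ≤ q ^ 5 := one_le_pow₀ (by linarith)
      nlinarith
    nlinarith
  have h12 : z ≤ z * q := by nlinarith
  have h13 : 0 < z * q ^ 2 := mul_pos (by linarith) (by positivity)
  nlinarith

/-- each line meets a quasi-Hermitian variety with characteristic
vector in `C_p` in at most `q + 1` or at least `q² - q + 1` points. -/
theorem stmt6 (p h q r : ℕ) (hp : p.Prime) (hh : 1 ≤ h) (hq : q = p ^ h) (hq4 : 4 < q)
    (hr : 3 ≤ r)
    (F : Type) [Field F] [Fintype F] (hF : Fintype.card F = q ^ 2)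
    (V : Set (ProjPoint F (r + 1))) (hV : IsQuasiHermitian F q r V)
    (hcode : charVec F p (r + 1) V ∈ hypCode F p (r + 1)) :
    ∀ ℓ : Submodule F (Fin (r + 1) → F), finrank F ℓ = 2 →
      secant F (r + 1) V ℓ ≤ q + 1 ∨ q ^ 2 - q + 1 ≤ secant F (r + 1) V ℓ := by
  classical
  intro ℓ hℓ
  by_contra hcon
  push Not at hcon
  obtain ⟨hx1, hx2⟩ := hcon
  have : Fact p.Prime := ⟨hp⟩
  have : CharP F p := by
    refine charP_of_card_eq_prime_pow (f := h * 2) ?_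
    rw [hF, hq, ← pow_mul]
  obtain ⟨G, hGm, hG⟩ := code_polyFn (by omega) _ hcode
  have hGV : ∀ v : Fin (r + 1) → F, v ≠ 0 → G v = if inV V v then 1 else 0 := by
    intro v hv
    rw [hG v hv]
    unfold charVec
    by_cases h : mkPt v hv ∈ V
    · rw [Set.indicator_of_mem h, if_pos ⟨hv, h⟩]
      simp
    · rw [Set.indicator_of_notMem h, if_neg (fun h' => h h'.2)]
      simp
  set x := secant F (r + 1) V ℓ with hx
  have hVtop : secant F (r + 1) V ⊤ = V.ncard := by
    unfold secant
    congr 1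
    ext P
    simp [pointsIn]
  have hq0 : (q : F) = 0 := by
    rw [hq, Nat.cast_pow, CharP.cast_eq_zero, zero_pow (by omega)]
  have hVF : (V.ncard : F) = 1 := by
    have h1 := congrArg (Int.cast : ℤ → F) hV.1
    push_cast at h1
    rw [hq0, zero_pow (by omega), zero_pow (by omega), zero_pow (by omega)] at h1
    have h2 : ((-1 : F) ^ r) * (-1) ^ r = 1 := by rw [← mul_pow]; simp
    linear_combination -h1 + h2
  have hxF : (x : F) = 1 := by
    rw [secant_mod G hGm V hGV ℓ (by omega), ← hVF, ← hVtop, secant_mod G hGm V hGV ⊤]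
    rw [finrank_top, Module.finrank_fin_fun]
    omega
  have hqq : q ≤ q ^ 2 := by nlinarith
  have hxne : x ≠ q ^ 2 - q := by
    intro h
    rw [h, Nat.cast_sub hqq] at hxF
    push_cast at hxF
    rw [hq0] at hxF
    simp at hxF
  have hfin : ∀ s, q + 2 ≤ s → s + q + 2 ≤ q ^ 2 →
      s * (Fintype.card F - s) * (Fintype.card F ^ (r + 1) - Fintype.card F ^ 2) ≤
      (Fintype.card F - 1) * (Fintype.card F * ((Fintype.card F - 1) * secant F (r + 1) V ⊤)) →
      False := by
    intro s hs1 hs2 hs3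
    rw [hVtop, hF] at hs3
    have e1 : (q ^ 2) ^ 2 ≤ (q ^ 2) ^ (r + 1) := Nat.pow_le_pow_right (by positivity) (by omega)
    have e2 : 1 ≤ q ^ 2 := by nlinarith
    zify [e1, e2, show s ≤ q ^ 2 by omega] at hs3 hs1 hs2 hq4
    have hV1 := hV.1
    have hz : (q : ℤ) ^ 3 ≤ (q : ℤ) ^ r := pow_le_pow_right₀ (by omega) hr
    rw [pow_succ _ r] at hV1
    rw [← pow_mul, show 2 * (r + 1) = r + r + 2 by ring, pow_add, pow_add] at hs3
    exact final_arith q s ((q : ℤ) ^ r) V.ncard ((-1) ^ r) (by omega) hz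
      (by rcases neg_one_pow_eq_or ℤ r with h | h <;> simp [h]) hs1 hs2 hV1 hs3
  by_cases hcase : x + q + 2 ≤ q ^ 2
  · obtain ⟨b, hbℓ, hb0, hbV⟩ : ∃ b ∈ ℓ, b ≠ 0 ∧ ¬ inV V b := by
      by_contra! hall
      have h1 := card_inV V ℓ
      have h2 : Finset.univ.filter (fun v => inV V v ∧ v ∈ ℓ) =
          (Finset.univ.filter (fun v => v ∈ ℓ)).erase 0 := by
        ext v
        simp only [Finset.mem_filter, Finset.mem_univ, true_and, Finset.mem_erase]
        exact ⟨fun h => ⟨h.1.1, h.2⟩, fun h => ⟨hall v h.2 h.1, h.2⟩⟩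
      have h3 : Fintype.card ℓ = _ := Module.card_eq_pow_finrank (K := F) (V := ℓ)
      rw [h2, Finset.card_erase_of_mem (by simp), ← Fintype.card_subtype, hF, ← hx] at h1
      rw [hℓ, hF] at h3
      have h4 : Fintype.card {v // v ∈ ℓ} = (q ^ 2) ^ 2 := by rw [← h3]
      rw [h4] at h1
      have e2 : 1 ≤ q ^ 2 := by nlinarith
      have e3 : 1 ≤ (q ^ 2) ^ 2 := Nat.one_le_pow _ _ (by omega)
      zify [e2, e3] at h1 hcase e2
      have hq4' : (4 : ℤ) < q := by exact_mod_cast hq4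
      nlinarith
    obtain ⟨s, hs1, hs2⟩ := main_ineq G hGm V hGV ℓ hℓ b hbℓ hb0
    rw [if_neg hbV, ← hx] at hs1
    exact hfin s (by omega) (by omega) hs2
  · obtain ⟨b, hbℓ, hbV⟩ : ∃ b ∈ ℓ, inV V b := by
      by_contra! hall
      have h1 := card_inV V ℓ
      rw [Finset.card_eq_zero.mpr, hF, ← hx] at h1
      · have e2 : 1 < q ^ 2 := by nlinarith
        rcases Nat.mul_eq_zero.mp h1.symm with h | h <;> omega
      · ext v
        simp only [Finset.mem_filter, Finset.mem_univ, true_and, Finset.notMem_empty, iff_false]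
        exact fun h => hall v h.2 h.1
    obtain ⟨s, hs1, hs2⟩ := main_ineq G hGm V hGV ℓ hℓ b hbℓ hbV.1
    rw [if_pos hbV, ← hx] at hs1
    have e5 : 5 * q ≤ q ^ 2 := by nlinarith
    exact hfin s (by omega) (by omega) hs2
end

section
/- Let r ≥ 3 and q = p^h > 4 with p prime, h ≥ 1, and let V be a quasi-Hermitian variety of PG(r,q^2) whose characteristic vector v^V belongs to C_p. Let π be a plane of PG(r,q^2) with |π ∩ V| ≤ q^3 + 2q^2, and suppose that whenever q^3 + 1 ≤ |π ∩ V|, there exists a line of π meeting π ∩ V in at least q^2 - q + 1 points. Then there exist at most q+1 distinct lines of π such that the characteristic vector of π ∩ V (as a function on the points of π with values in F_p) equals the sum of the characteristic vectors of these lines, each with coefficient 1. -/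
/-!
Common framework: `ProjPoint F n` is the set of points of the projective space
PG(n-1, |F|) (so PG(r, q²) corresponds to `n = r + 1` and `Fintype.card F = q ^ 2`).
Projective subspaces of projective dimension `k` are the submodules of `Fin n → F`
of `finrank` equal to `k + 1`; lines have finrank 2, planes finrank 3 and
hyperplanes finrank `n - 1 = r`.
-/

open Module Matrix

section QHAffine
open Polynomial

/-- Hankel-type determinant bound. -/
theorem kl_affine {F : Type} [Field F] [Fintype F] [DecidableEq F] (g : F → F → F)
    (M : ℕ → F[X]) (hdeg : ∀ j, (M j).natDegree ≤ j)
    (hM : ∀ j y, (M j).eval y = ∑ x, g y x * x ^ j) (y0 : F) (s : ℕ)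
    (hs : (Finset.univ.filter (fun x => g y0 x ≠ 0)).card = s) :
    ∑ y, (s - (Finset.univ.filter (fun x => g y x ≠ 0)).card) ≤ s * (s - 1) := by
  classical
  set n : F → ℕ := fun y => (Finset.univ.filter (fun x => g y x ≠ 0)).card with hn
  let A : Matrix (Fin s) (Fin s) F[X] := Matrix.of fun i j => M (i + j)
  -- degree
  have hA : A.det.natDegree ≤ s * (s - 1) := by
    rw [Matrix.det_apply]
    refine natDegree_sum_le_of_forall_le _ _ ?_
    intro σ _
    refine (natDegree_smul_le _ _).trans ?_
    refine (natDegree_prod_le _ _).trans ?_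
    calc ∑ i, (A (σ i) i).natDegree ≤ ∑ i : Fin s, ((σ i : ℕ) + (i : ℕ)) :=
          Finset.sum_le_sum fun i _ => hdeg _
      _ = ∑ i : Fin s, (i : ℕ) + ∑ i : Fin s, (i : ℕ) := by
          rw [Finset.sum_add_distrib, Equiv.sum_comp σ (fun i : Fin s => (i : ℕ))]
      _ = s * (s - 1) := by
          rw [Fin.sum_univ_eq_sum_range (fun i => i) s, ← Finset.sum_range_id_mul_two]; ring
  -- nonvanishing
  have hne : A.det.eval y0 ≠ 0 := by
    let e := (Finset.equivFinOfCardEq hs).symm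
    let v : Fin s → F := fun t => (e t : F)
    have hv : Function.Injective v := fun a b h => e.injective (Subtype.ext h)
    have hmap : (A.map (eval y0)) =
        (Matrix.vandermonde v).transpose * Matrix.diagonal (fun t => g y0 (v t)) *
          Matrix.vandermonde v := by
      ext i j
      rw [Matrix.mul_apply]
      simp only [Matrix.map_apply, Matrix.of_apply, A, hM, Matrix.mul_diagonal,
        Matrix.transpose_apply, Matrix.vandermonde_apply]
      have : ∑ x, g y0 x * x ^ ((i : ℕ) + j) =
          ∑ x ∈ Finset.univ.filter (fun x => g y0 x ≠ 0), g y0 x * x ^ ((i : ℕ) + j) := by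
        refine (Finset.sum_subset (Finset.subset_univ _) ?_).symm
        intro x _ hx
        simp only [Finset.mem_filter, Finset.mem_univ, true_and, not_not] at hx
        simp [hx]
      rw [this, ← Finset.sum_coe_sort, ← Equiv.sum_comp e]
      refine Finset.sum_congr rfl fun t _ => ?_
      simp only [v]; ring
    have hev : A.det.eval y0 = (A.map (eval y0)).det := by
      have := RingHom.map_det (evalRingHom y0) A
      simpa using this
    rw [hev, hmap, Matrix.det_mul, Matrix.det_mul, Matrix.det_transpose, Matrix.det_diagonal]
    have h1 := Matrix.det_vandermonde_ne_zero_iff.2 hv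
    refine mul_ne_zero (mul_ne_zero h1 ?_) h1
    refine Finset.prod_ne_zero_iff.2 fun t _ => ?_
    exact (Finset.mem_filter.1 (e t).2).2
  have hA0 : A.det ≠ 0 := fun h => hne (by simp [h])
  -- divisibility
  have hdvd : ∀ y, (X - C y) ^ (s - n y) ∣ A.det := by
    intro y
    let m : F[X] := ∏ x ∈ Finset.univ.filter (fun x => g y x ≠ 0), (X - C x)
    have hm : m.Monic := monic_prod_of_monic _ _ fun x _ => monic_X_sub_C x
    have hmd : m.natDegree = n y := by
      simp only [m]; rw [natDegree_prod_of_monic _ _ fun x _ => monic_X_sub_C x]; simp [hn]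
    let b : Fin s → F[X] := fun k => if n y ≤ k then m * X ^ ((k : ℕ) - n y) else X ^ (k : ℕ)
    have hbm : ∀ k, (b k).Monic := by
      intro k; simp only [b]; split_ifs
      · exact hm.mul (monic_X_pow _)
      · exact monic_X_pow _
    have hbd : ∀ k, (b k).natDegree = k := by
      intro k; simp only [b]; split_ifs with h
      · rw [hm.natDegree_mul (monic_X_pow _), natDegree_X_pow, hmd]; omega
      · simp
    let U : Matrix (Fin s) (Fin s) F := Matrix.of fun (i j : Fin s) => (b j).coeff i
    have hU : U.det = 1 := by
      rw [Matrix.det_of_isUpperTriangular]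
      · refine Finset.prod_eq_one fun k _ => ?_
        have := hbm k
        rw [Monic, leadingCoeff, hbd] at this
        simpa [U] using this
      · intro i j hij
        simp only [U, Matrix.of_apply]
        apply coeff_eq_zero_of_natDegree_lt
        rw [hbd]; exact hij
    let UC : Matrix (Fin s) (Fin s) F[X] := U.map C
    have hUC : UC.det = 1 := by
      have := RingHom.map_det (C : F →+* F[X]) U
      rw [hU] at this; simpa [UC] using this.symm
    have hcol : ∀ i k : Fin s, n y ≤ k → (X - C y) ∣ (A * UC) i k := by
      intro i k hk
      rw [dvd_iff_isRoot, IsRoot, Matrix.mul_apply, eval_finsetSum]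
      simp only [A, UC, U, Matrix.of_apply, Matrix.map_apply, eval_mul, eval_C, hM]
      have h2 : ∀ x, ∑ j : Fin s, x ^ (j : ℕ) * (b k).coeff j = (b k).eval x := by
        intro x
        rw [eval_eq_sum_range' (n := s) (by rw [hbd]; exact k.2),
          ← Fin.sum_univ_eq_sum_range (fun j => (b k).coeff j * x ^ j) s]
        exact Finset.sum_congr rfl fun j _ => mul_comm _ _
      calc ∑ j : Fin s, (∑ x, g y x * x ^ ((i : ℕ) + j)) * (b k).coeff j
          = ∑ j : Fin s, ∑ x, g y x * x ^ (i : ℕ) * (x ^ (j : ℕ) * (b k).coeff j) := by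
            refine Finset.sum_congr rfl fun j _ => ?_
            rw [Finset.sum_mul]
            exact Finset.sum_congr rfl fun x _ => by ring
        _ = ∑ x, g y x * x ^ (i : ℕ) * (b k).eval x := by
            rw [Finset.sum_comm]
            refine Finset.sum_congr rfl fun x _ => ?_
            rw [← h2, Finset.mul_sum]
        _ = 0 := by
            refine Finset.sum_eq_zero fun x _ => ?_
            by_cases hx : g y x = 0
            · simp [hx]
            · have : (b k).eval x = 0 := by
                simp only [b, if_pos hk, eval_mul, m, eval_prod]
                rw [Finset.prod_eq_zero (i := x)]
                · simp
                · simp [hx]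
                · simp
              simp [this]
    choose D hD using hcol
    let v : Fin s → F[X] := fun k => if n y ≤ k then X - C y else 1
    let D' : Matrix (Fin s) (Fin s) F[X] :=
      Matrix.of fun i k => if h : n y ≤ k then D i k h else (A * UC) i k
    have hfac : A * UC = Matrix.of (fun i k => v k * D' i k) := by
      ext1 i k
      simp only [v, D', Matrix.of_apply]
      split_ifs with h
      · exact hD i k h
      · simp
    have hdet : A.det = (∏ k, v k) * D'.det := by
      rw [← Matrix.det_mul_row, ← hfac, Matrix.det_mul, hUC, mul_one]
    rw [hdet]
    refine Dvd.dvd.mul_right ?_ _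
    have : ∏ k, v k = (X - C y) ^ (s - n y) := by
      simp only [v]
      rw [Fin.prod_univ_eq_prod_range (fun k => if n y ≤ k then (X - C y : F[X]) else 1) s,
        ← Finset.prod_filter, Finset.prod_const]
      congr 1
      have : (Finset.range s).filter (fun x => n y ≤ x) = Finset.Ico (n y) s := by
        ext x; simp [and_comm]
      rw [this, Nat.card_Ico]
    rw [this]
  have hprod : ∏ y, (X - C y) ^ (s - n y) ∣ A.det := by
    refine Finset.prod_dvd_of_coprime ?_ fun y _ => hdvd y
    intro a _ b _ hab
    exact (isCoprime_X_sub_C_of_isUnit_sub (sub_ne_zero.2 hab).isUnit).pow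
  have := natDegree_le_of_dvd hprod hA0
  rw [natDegree_prod_of_monic _ _ fun y _ => (monic_X_sub_C y).pow _] at this
  simp only [natDegree_pow, natDegree_X_sub_C, mul_one] at this
  exact this.trans hA

end QHAffine

set_option linter.unusedSectionVars false
set_option linter.unusedVariables false
namespace QHCore
open Configuration Finset
open scoped Classical

variable {P L : Type} [Fintype P] [Fintype L] [Membership P L] [ProjectivePlane P L]

/-- Number of points of `A` on the line `l`. -/
noncomputable def sec (A : Finset P) (l : L) : ℕ := (A.filter (fun x => x ∈ l)).card

/-- Lines through a point. -/
noncomputable def thru (Z : P) : Finset L := univ.filter (fun l => Z ∈ l)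

/-- Points of a line. -/
noncomputable def pts (l : L) : Finset P := univ.filter (fun x => x ∈ l)

/-- Support of a function. -/
noncomputable def supp {p : ℕ} (c : P → ZMod p) : Finset P := univ.filter (fun x => c x ≠ 0)

/-- Indicator function of a line. -/
noncomputable def ind (p : ℕ) (l : L) : P → ZMod p := fun x => if x ∈ l then 1 else 0

/-- Indicator function of a set. -/
noncomputable def indS (p : ℕ) (S : Finset P) : P → ZMod p := fun x => if x ∈ S then 1 else 0

theorem mem_thru (Z : P) (l : L) : l ∈ thru Z ↔ Z ∈ l := by simp [thru]
theorem mem_pts (Z : P) (l : L) : Z ∈ pts l ↔ Z ∈ l := by simp [pts]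

theorem card_pts (l : L) : (pts (P := P) l).card = ProjectivePlane.order P L + 1 := by
  rw [← ProjectivePlane.pointCount_eq P l, pointCount, Nat.card_eq_fintype_card,
    Fintype.card_subtype, pts]

theorem card_thru (Z : P) : (thru (L := L) Z).card = ProjectivePlane.order P L + 1 := by
  rw [← ProjectivePlane.lineCount_eq L Z, lineCount, Nat.card_eq_fintype_card,
    Fintype.card_subtype, thru]

theorem eq_of_two {a b : P} {l m : L} (hab : a ≠ b) (h1 : a ∈ l) (h2 : b ∈ l) (h3 : a ∈ m)
    (h4 : b ∈ m) : l = m :=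
  (Nondegenerate.eq_or_eq h1 h2 h3 h4).resolve_left hab

theorem exists_line (a b : P) (hab : a ≠ b) : ∃ l : L, a ∈ l ∧ b ∈ l :=
  ⟨_, HasLines.mkLine_ax (L := L) hab⟩

theorem card_inter_le {l m : L} (h : l ≠ m) : (pts (P := P) l ∩ pts m).card ≤ 1 := by
  rw [Finset.card_le_one]
  intro a ha b hb
  simp only [mem_inter, mem_pts] at ha hb
  by_contra hab
  exact h (eq_of_two hab ha.1 hb.1 ha.2 hb.2)

theorem exists_inter {l m : L} (h : l ≠ m) : ∃ x : P, x ∈ l ∧ x ∈ m :=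
  ⟨_, HasPoints.mkPoint_ax (P := P) h⟩

theorem sum_thru (A : Finset P) (Z : P) (hZ : Z ∉ A) :
    ∑ l ∈ thru (L := L) Z, sec A l = A.card := by
  unfold sec
  rw [← Finset.card_biUnion]
  · congr 1
    ext x
    simp only [mem_biUnion, mem_thru, mem_filter]
    constructor
    · rintro ⟨l, _, h, _⟩; exact h
    · intro hx
      have hne : Z ≠ x := fun h => hZ (h ▸ hx)
      obtain ⟨l, h1, h2⟩ := exists_line (L := L) Z x hne
      exact ⟨l, h1, hx, h2⟩
  · intro l hl m hm hlm
    rw [Function.onFun, Finset.disjoint_left]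
    intro x hx hx'
    simp only [coe_filter, thru, mem_filter, mem_univ, true_and, Set.mem_ofPred_eq] at *
    have hne : Z ≠ x := fun h => hZ (h ▸ hx.1)
    exact hlm (eq_of_two hne hl hx.2 hm hx'.2)

theorem sum_thru_mem (A : Finset P) (Z : P) (hZ : Z ∈ A) :
    ∑ l ∈ thru (L := L) Z, sec A l = A.card + ProjectivePlane.order P L := by
  have h := sum_thru (L := L) (A.erase Z) Z (by simp)
  have h2 : ∀ l ∈ thru (L := L) Z, sec A l = sec (A.erase Z) l + 1 := by
    intro l hl
    rw [mem_thru] at hl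
    unfold sec
    rw [Finset.filter_erase, Finset.card_erase_add_one]
    simp [hZ, hl]
  rw [Finset.sum_congr rfl h2, Finset.sum_add_distrib, h]
  simp only [sum_const, smul_eq_mul, mul_one, card_thru, Finset.card_erase_of_mem hZ]
  have : 0 < A.card := Finset.card_pos.2 ⟨Z, hZ⟩
  omega

/-- a line not entirely inside `A` has a point off `A`. -/
theorem exists_zero (A : Finset P) (l : L) (h : sec A l < ProjectivePlane.order P L + 1) :
    ∃ Z, Z ∈ l ∧ Z ∉ A := by
  by_contra hcon
  push Not at hcon
  rw [← card_pts (P := P) l] at h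
  unfold sec at h
  have : pts l ⊆ A.filter (fun x => x ∈ l) := by
    intro x hx
    rw [mem_pts] at hx
    simp [hx, hcon x hx]
  exact absurd (Finset.card_le_card this) (by omega)

theorem exists_other (Z : P) (l : L) (hl : Z ∈ l) : ∃ m : L, Z ∈ m ∧ l ≠ m := by
  have h : 1 < (thru (L := L) Z).card := by
    rw [card_thru]; have := ProjectivePlane.one_lt_order P L; omega
  obtain ⟨m, hm, hne⟩ := Finset.exists_mem_ne h l
  exact ⟨m, (mem_thru _ _).1 hm, hne.symm⟩

theorem bonferroni (S : Finset P) (d : ℕ) (T : Finset L) (hT : ∀ l ∈ T, d ≤ sec S l) :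
    2 * (T.card * d) ≤ 2 * S.card + T.card * (T.card - 1) := by
  have key : 2 * (T.card * d) ≤
      2 * (S.filter (fun x => ∃ l ∈ T, x ∈ l)).card + T.card * (T.card - 1) := by
    induction T using Finset.induction_on with
    | empty => simp
    | insert l T hl ih =>
      have ih := ih fun m hm => hT m (Finset.mem_insert_of_mem hm)
      have hd := hT l (Finset.mem_insert_self _ _)
      rw [Finset.card_insert_of_notMem hl]
      have h1 : S.filter (fun x => ∃ m ∈ insert l T, x ∈ m) =
          S.filter (fun x => x ∈ l) ∪ S.filter (fun x => ∃ m ∈ T, x ∈ m) := by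
        ext x; simp only [mem_filter, mem_insert, mem_union]
        constructor
        · rintro ⟨h, m, rfl | hm, hx⟩
          · exact Or.inl ⟨h, hx⟩
          · exact Or.inr ⟨h, m, hm, hx⟩
        · rintro (⟨h, hx⟩ | ⟨h, m, hm, hx⟩)
          · exact ⟨h, l, Or.inl rfl, hx⟩
          · exact ⟨h, m, Or.inr hm, hx⟩
      have h2 : (S.filter (fun x => x ∈ l) ∩ S.filter (fun x => ∃ m ∈ T, x ∈ m)).card
          ≤ T.card := by
        calc _ ≤ (T.biUnion fun m => pts (P := P) l ∩ pts m).card := by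
              apply Finset.card_le_card
              intro x
              simp only [mem_inter, mem_filter, mem_biUnion, mem_pts]
              rintro ⟨⟨_, h⟩, _, m, hm, hx⟩
              exact ⟨m, hm, h, hx⟩
          _ ≤ ∑ m ∈ T, (pts (P := P) l ∩ pts m).card := Finset.card_biUnion_le
          _ ≤ ∑ m ∈ T, 1 := Finset.sum_le_sum fun m hm =>
              card_inter_le fun h => hl (h ▸ hm)
          _ = T.card := by simp
      have h3 := Finset.card_union_add_card_inter (S.filter (fun x => x ∈ l))
        (S.filter (fun x => ∃ m ∈ T, x ∈ m))
      rw [h1]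
      unfold sec at hd
      generalize T.card = t at *
      have h4 : (t + 1) * (t + 1 - 1) = t * (t - 1) + 2 * t := by
        cases t <;> simp; ring
      rw [h4]
      nlinarith
  have : (S.filter (fun x => ∃ l ∈ T, x ∈ l)).card ≤ S.card :=
    Finset.card_le_card (Finset.filter_subset _ _)
  omega


/-- The data used in the combinatorial core. -/
structure Core (L : Type) [Fintype L] [Membership P L] [ProjectivePlane P L]
    (p q : ℕ) (C : Submodule (ZMod p) (P → ZMod p)) (S : Finset P) : Prop where
  hp : p.Prime
  hpq : p ∣ q
  hq4 : 4 < q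
  hq8 : p = 2 → 8 ≤ q
  ord : ProjectivePlane.order P L = q ^ 2
  ind_mem : ∀ l : L, ind p l ∈ C
  indS_mem : indS p S ∈ C
  kl : ∀ c ∈ C, ∀ (Z : P) (l m : L), Z ∈ l → Z ∈ m → l ≠ m → c Z = 0 →
    sec (supp c) l * (q ^ 2 + 1) + sec (supp c) m ≤ (supp c).card + sec (supp c) l ^ 2
  modp : ∀ l : L, sec S l % p = 1
  dich : ∀ l : L, sec S l ≤ q + 1 ∨ q ^ 2 ≤ sec S l + q + 1
  size : S.card ≤ q ^ 3 + 2 * q ^ 2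
  secant : q ^ 3 + 1 ≤ S.card → ∃ l : L, q ^ 2 - q + 1 ≤ sec S l

theorem supp_indS {p : ℕ} (hp : p.Prime) (S : Finset P) : supp (indS p S) = S := by
  haveI := Fact.mk hp
  ext x
  simp [supp, indS]

variable {p q : ℕ} {C : Submodule (ZMod p) (P → ZMod p)} {S : Finset P}

theorem Core.klS (H : Core L p q C S) (Z : P) (l m : L) (h1 : Z ∈ l) (h2 : Z ∈ m) (h3 : l ≠ m)
    (hZ : Z ∉ S) : sec S l * (q ^ 2 + 1) + sec S m ≤ S.card + sec S l ^ 2 := by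
  have := H.kl _ H.indS_mem Z l m h1 h2 h3 (by simp [indS, hZ])
  rwa [supp_indS H.hp] at this

theorem Core.sec_pos (H : Core L p q C S) (l : L) : 1 ≤ sec S l := by
  have := H.modp l
  rcases Nat.eq_zero_or_pos (sec S l) with h | h
  · simp [h] at this
  · exact h

/-- The local step: maximum of the secants through a point of the support. -/
theorem local_max (H : Core L p q C S) (A : Finset P) (x : P) (hx : x ∈ A) :
    ∃ l : L, x ∈ l ∧ (∀ m : L, x ∈ m → sec A m ≤ sec A l) ∧
      A.card + q ^ 2 ≤ sec A l * (q ^ 2 + 1) := by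
  have hne : (thru (L := L) x).Nonempty := by
    rw [← Finset.card_pos, card_thru]; omega
  obtain ⟨l, hl, hmax⟩ := Finset.exists_max_image (thru (L := L) x) (sec A) hne
  refine ⟨l, (mem_thru _ _).1 hl, fun m hm => hmax m ((mem_thru _ _).2 hm), ?_⟩
  have h := sum_thru_mem (L := L) A x hx
  have h2 := Finset.sum_le_card_nsmul _ _ _ hmax
  rw [h, card_thru, H.ord, smul_eq_mul] at h2
  linarith

theorem Core.local_small (H : Core L p q C S) (hw : S.card ≤ q ^ 3) (x : P) (hx : x ∈ S)
    (hshort : ∀ l : L, x ∈ l → sec S l ≤ q + 1) : False := by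
  have hq4 := H.hq4
  obtain ⟨l, hl, hmax, hsum⟩ := local_max (L := L) H S x hx
  have hs := hshort l hl
  obtain ⟨Z, hZl, hZ⟩ := exists_zero S l (by rw [H.ord]; nlinarith)
  have hk : ∀ m : L, Z ∈ m → l ≠ m → sec S l * (q ^ 2 + 1) + sec S m ≤ S.card + sec S l ^ 2 :=
    fun m hm hne => H.klS Z l m hZl hm hne hZ
  obtain ⟨m0, hm0, hne0⟩ := exists_other (L := L) Z l hZl
  have h0 := hk m0 hm0 hne0
  have hpos := H.sec_pos m0
  have hs1 : sec S l = q + 1 := by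
    by_contra hcon
    have : sec S l ≤ q := by omega
    nlinarith
  have hall : ∀ m ∈ (thru (L := L) Z).erase l, sec S m ≤ q - 1 := by
    intro m hm
    rw [mem_erase, mem_thru] at hm
    have h1 := hk m hm.2 (Ne.symm hm.1)
    rw [hs1] at h1
    have h2 : sec S m ≤ q := by nlinarith
    have h3 : sec S m ≠ q := by
      intro h
      have := H.modp m
      rw [h, Nat.mod_eq_zero_of_dvd H.hpq] at this
      omega
    omega
  have h4 := sum_thru (L := L) S Z hZ
  rw [← Finset.add_sum_erase _ _ ((mem_thru Z l).2 hZl)] at h4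
  have h5 := Finset.sum_le_card_nsmul _ _ _ hall
  rw [Finset.card_erase_of_mem ((mem_thru Z l).2 hZl), card_thru, H.ord, smul_eq_mul] at h5
  rw [hs1] at h4 h0
  obtain ⟨k, rfl⟩ : ∃ k, q = k + 1 := ⟨q - 1, by omega⟩
  simp only [Nat.add_sub_cancel] at h5
  nlinarith

theorem Core.local_big (H : Core L p q C S) (hw : q ^ 3 + 1 ≤ S.card) (x : P) (hx : x ∈ S)
    (hshort : ∀ l : L, x ∈ l → sec S l ≤ q + 1) : False := by
  have hq4 := H.hq4
  haveI := Fact.mk H.hp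
  obtain ⟨l0, hl0⟩ := H.secant hw
  have hxl0 : x ∉ l0 := by
    intro h
    have := hshort l0 h
    have h2 : 2 * q + 1 ≤ q ^ 2 := by nlinarith
    omega
  have hq2 : q ≤ q ^ 2 := by nlinarith
  -- upper bound on |S|
  have hS : S.card ≤ q ^ 3 + q + 1 := by
    obtain ⟨l, hl, -, hsum⟩ := local_max (L := L) H S x hx
    have := hshort l hl
    nlinarith
  set c : P → ZMod p := indS p S - ind p l0 with hc
  have hcC : c ∈ C := C.sub_mem H.indS_mem (H.ind_mem l0)
  have hsupp : ∀ y, y ∈ supp c ↔ ((y ∈ S ∧ y ∉ l0) ∨ (y ∉ S ∧ y ∈ l0)) := by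
    intro y
    simp only [supp, mem_filter, mem_univ, true_and, hc, Pi.sub_apply, indS, ind]
    by_cases h1 : y ∈ S <;> by_cases h2 : y ∈ l0 <;> simp [h1, h2]
  have hwt : (supp c).card + q ^ 2 + 2 * 0 ≤ q ^ 3 + 3 * q := by
    have e1 : supp c = (S \ S.filter (fun y => y ∈ l0)) ∪ (pts l0 \ S.filter (fun y => y ∈ l0)) := by
      ext y
      simp only [hsupp, mem_union, mem_sdiff, mem_filter, mem_pts]
      tauto
    have e2 : (supp c).card ≤ _ := e1 ▸ Finset.card_union_le _ _
    have e3 := Finset.card_sdiff_add_card_eq_card (Finset.filter_subset (fun y => y ∈ l0) S)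
    have e4 : S.filter (fun y => y ∈ l0) ⊆ pts l0 := by
      intro y hy; rw [mem_pts]; exact (mem_filter.1 hy).2
    have e5 := Finset.card_sdiff_add_card_eq_card e4
    rw [card_pts, H.ord] at e5
    unfold sec at hl0
    omega
  have hsec : ∀ m : L, x ∈ m → sec (supp c) m ≤ q + 2 := by
    intro m hm
    have hne : m ≠ l0 := fun h => hxl0 (h ▸ hm)
    have e1 : (supp c).filter (fun y => y ∈ m) ⊆
        S.filter (fun y => y ∈ m) ∪ (pts m ∩ pts l0) := by
      intro y
      simp only [mem_filter, hsupp, mem_union, mem_inter, mem_pts]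
      tauto
    have e2 := (Finset.card_le_card e1).trans (Finset.card_union_le _ _)
    have e3 := card_inter_le (P := P) hne
    have e4 := hshort m hm
    unfold sec at *
    omega
  have hxc : x ∈ supp c := by rw [hsupp]; exact Or.inl ⟨hx, hxl0⟩
  obtain ⟨l, hl, hmax, hsum⟩ := local_max (L := L) H (supp c) x hxc
  have hs := hsec l hl
  obtain ⟨Z, hZl, hZ⟩ := exists_zero (supp c) l (by rw [H.ord]; nlinarith)
  have hZ0 : c Z = 0 := by simpa [supp] using hZ
  have hk := fun (m : L) (hm : Z ∈ m) (hne : l ≠ m) => H.kl c hcC Z l m hZl hm hne hZ0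
  obtain ⟨m0, hm0, hne0⟩ := exists_other (L := L) Z l hZl
  have h0 := hk m0 hm0 hne0
  have h4 := sum_thru (L := L) (supp c) Z hZ
  rw [← Finset.add_sum_erase _ _ ((mem_thru Z l).2 hZl)] at h4
  set s := sec (supp c) l with hsdef
  have hs1 : q ≤ s := by by_contra hcon; nlinarith
  have hs2 : s = q := by
    have h6 : s = q ∨ s = q + 1 ∨ s = q + 2 := by omega
    rcases h6 with h6 | h6 | h6
    · exact h6
    · rw [h6] at h0; nlinarith
    · rw [h6] at h0; nlinarith
  have h5 : ∑ m ∈ (thru (L := L) Z).erase l, sec (supp c) m = 0 := by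
    refine Finset.sum_eq_zero fun m hm => ?_
    rw [mem_erase, mem_thru] at hm
    have h1 := hk m hm.2 (Ne.symm hm.1)
    rw [hs2] at h1 hsum
    nlinarith
  rw [h5, hs2] at h4
  rw [hs2] at h0
  nlinarith

theorem Core.exists_long (H : Core L p q C S) (x : P) (hx : x ∈ S) :
    ∃ l : L, x ∈ l ∧ q + 1 < sec S l := by
  by_contra hcon
  push Not at hcon
  rcases Nat.lt_or_ge (q ^ 3) S.card with h | h
  · exact H.local_big h x hx hcon
  · exact H.local_small h x hx hcon

/-- The long lines. -/
noncomputable def longs (L : Type) [Fintype L] [Membership P L] (q : ℕ) (S : Finset P) :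
    Finset L := univ.filter (fun l => q + 1 < sec S l)

theorem Core.long_bound (H : Core L p q C S) :
    ∃ d, (∀ l ∈ longs L q S, d ≤ sec S l) ∧
      ((8 ≤ q ∧ d + q + 1 = q ^ 2) ∨ d + q = q ^ 2 + 1) := by
  have hq4 := H.hq4
  have hq2 : q + 1 ≤ q ^ 2 := by nlinarith
  have hl : ∀ l ∈ longs L q S, q ^ 2 ≤ sec S l + q + 1 := by
    intro l hl
    have h1 : q + 1 < sec S l := by simpa [longs] using hl
    rcases H.dich l with h | h
    · omega
    · exact h
  by_cases h2 : p = 2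
  · exact ⟨q ^ 2 - (q + 1), fun l h => by have := hl l h; omega, Or.inl ⟨H.hq8 h2, by omega⟩⟩
  · refine ⟨q ^ 2 + 1 - q, fun l h => ?_, Or.inr (by omega)⟩
    have h1 := hl l h
    have h3 := H.modp l
    have hp2 : 3 ≤ p := by have := H.hp.two_le; omega
    obtain ⟨a, ha⟩ := H.hpq
    by_contra hcon
    have h4 : sec S l + q + 1 = q ^ 2 ∨ sec S l + q = q ^ 2 := by omega
    have e1 : sec S l = p * (sec S l / p) + 1 := by
      have := Nat.div_add_mod (sec S l) p; omega
    have e2 : q ^ 2 = p * (a * q) := by rw [sq]; nth_rewrite 1 [ha]; ring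
    rcases h4 with h4 | h4
    · have : p ∣ 2 := by
        have h5 : p * (sec S l / p) + p * a + 2 = p * (a * q) := by omega
        rw [← mul_add] at h5
        exact (Nat.dvd_add_right (dvd_mul_right p _)).1 (h5 ▸ dvd_mul_right p _)
      exact absurd (Nat.le_of_dvd (by norm_num) this) (by omega)
    · have : p ∣ 1 := by
        have h5 : p * (sec S l / p) + p * a + 1 = p * (a * q) := by omega
        rw [← mul_add] at h5
        exact (Nat.dvd_add_right (dvd_mul_right p _)).1 (h5 ▸ dvd_mul_right p _)
      exact absurd (Nat.le_of_dvd (by norm_num) this) (by omega)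

theorem Core.card_long_lt (H : Core L p q C S) (M w : ℕ) (hw : S.card ≤ w)
    (hM1 : 8 ≤ q → 2 * w + M * (M - 1) + 2 * (M * (q + 1)) < 2 * (M * q ^ 2))
    (hM2 : 2 * w + M * (M - 1) + 2 * (M * q) < 2 * (M * (q ^ 2 + 1))) :
    (longs L q S).card < M := by
  by_contra hcon
  push Not at hcon
  obtain ⟨T, hT, hTc⟩ := Finset.exists_subset_card_eq hcon
  obtain ⟨d, hd, hd2⟩ := H.long_bound
  have hb := bonferroni S d T fun l hl => hd l (hT hl)
  rw [hTc] at hb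
  rcases hd2 with ⟨h8, h⟩ | h
  · have := hM1 h8
    rw [← h] at this
    nlinarith
  · rw [← h] at hM2
    nlinarith

theorem Core.card_long1 (H : Core L p q C S) : (longs L q S).card < 2 * q + 1 := by
  have hq4 := H.hq4
  apply H.card_long_lt _ _ H.size
  · intro h8
    obtain ⟨k, rfl⟩ : ∃ k, q = k + 8 := ⟨q - 8, by omega⟩
    simp only [Nat.add_sub_cancel]
    ring_nf
    nlinarith [sq_nonneg k, Nat.zero_le (k ^ 3)]
  · obtain ⟨k, rfl⟩ : ∃ k, q = k + 5 := ⟨q - 5, by omega⟩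
    simp only [Nat.add_sub_cancel]
    ring_nf
    nlinarith [sq_nonneg k, Nat.zero_le (k ^ 3)]

theorem Core.size2 (H : Core L p q C S) : S.card ≤ (q + 1) * (q ^ 2 + 1) := by
  have hq4 := H.hq4
  have hk := H.card_long1
  -- a point off the long lines
  have hZ : ∃ Z : P, ∀ l ∈ longs L q S, Z ∉ l := by
    by_contra hcon
    push Not at hcon
    have h1 : (univ : Finset P) ⊆ (longs L q S).biUnion (fun l => pts l) := by
      intro x _
      obtain ⟨l, hl, hx⟩ := hcon x
      exact mem_biUnion.2 ⟨l, hl, (mem_pts _ _).2 hx⟩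
    have h2 := (Finset.card_le_card h1).trans Finset.card_biUnion_le
    simp only [card_pts, H.ord, sum_const, smul_eq_mul, card_univ,
      ProjectivePlane.card_points P L] at h2
    have : (longs L q S).card ≤ 2 * q := by omega
    nlinarith [Nat.mul_le_mul_right (q ^ 2 + 1) this]
  obtain ⟨Z, hZ⟩ := hZ
  have hshort : ∀ l ∈ thru (L := L) Z, sec S l ≤ q + 1 := by
    intro l hl
    by_contra hcon
    exact hZ l (by simpa [longs] using hcon) ((mem_thru _ _).1 hl)
  have hZS : Z ∉ S := by
    intro h
    obtain ⟨l, hl, h1⟩ := H.exists_long Z h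
    exact hZ l (by simpa [longs] using h1) hl
  have h := sum_thru (L := L) S Z hZS
  have h2 := Finset.sum_le_card_nsmul _ _ _ hshort
  rw [h, card_thru, H.ord, smul_eq_mul] at h2
  linarith

theorem Core.card_long2 (H : Core L p q C S) : (longs L q S).card < q + 5 := by
  have hq4 := H.hq4
  apply H.card_long_lt _ _ H.size2
  · intro h8
    obtain ⟨k, rfl⟩ : ∃ k, q = k + 8 := ⟨q - 8, by omega⟩
    have : k + 8 + 5 - 1 = k + 12 := by omega
    rw [this]
    ring_nf
    nlinarith [sq_nonneg k, Nat.zero_le (k ^ 3)]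
  · obtain ⟨k, rfl⟩ : ∃ k, q = k + 5 := ⟨q - 5, by omega⟩
    have : k + 5 + 5 - 1 = k + 9 := by omega
    rw [this]
    ring_nf
    nlinarith [sq_nonneg k, Nat.zero_le (k ^ 3)]

theorem arith_clean (q s B : ℕ) (h6 : 6 ≤ s) (hsB : s ≤ B)
    (h : s * (q ^ 2 + 1) ≤ (q + 4) * B + s ^ 2)
    (hB : (8 ≤ q ∧ B = 2 * q + 5) ∨ (5 ≤ q ∧ B = 2 * q + 3)) : False := by
  zify at *
  have e1 := mul_nonneg (sub_nonneg.2 h6) (sub_nonneg.2 hsB)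
  have e2 : (s : ℤ) * (q ^ 2 - 5 - B) ≤ (q - 2) * B := by nlinarith
  have e3 : (0 : ℤ) ≤ q ^ 2 - 5 - B := by
    rcases hB with ⟨h1, h2⟩ | ⟨h1, h2⟩ <;> rw [h2] <;> nlinarith
  have e4 := mul_nonneg (sub_nonneg.2 h6) e3
  rcases hB with ⟨h1, h2⟩ | ⟨h1, h2⟩ <;> rw [h2] at e2 e3 e4 <;> nlinarith


theorem Core.clean (H : Core L p q C S) :
    indS p S = ∑ l ∈ longs L q S, ind p l := by
  have hq4 := H.hq4
  have hk := H.card_long2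
  have := Fact.mk H.hp
  set T := longs L q S with hT
  set c : P → ZMod p := indS p S - ∑ l ∈ T, ind p l with hc
  have hcC : c ∈ C := C.sub_mem H.indS_mem (C.sum_mem fun l _ => H.ind_mem l)
  -- bound for the weight
  have hcov : ∀ x ∈ supp c, ∃ l ∈ T, x ∈ l := by
    intro x hx
    by_contra hcon
    push Not at hcon
    have hxS : x ∉ S := by
      intro h
      obtain ⟨l, hl, h1⟩ := H.exists_long x h
      exact hcon l (by simpa [hT, longs] using h1) hl
    have : c x = 0 := by
      simp only [hc, Pi.sub_apply, indS, hxS, if_false, Finset.sum_apply, zero_sub, neg_eq_zero]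
      refine Finset.sum_eq_zero fun l hl => ?_
      simp [ind, hcon l hl]
    simp [supp, this] at hx
  have hw : ∀ B, (∀ l ∈ T, sec (supp c) l ≤ B) → (supp c).card ≤ (q + 4) * B := by
    intro B hB
    have h1 : supp c ⊆ T.biUnion (fun l => (supp c).filter (fun x => x ∈ l)) := by
      intro x hx
      obtain ⟨l, hl, h⟩ := hcov x hx
      exact mem_biUnion.2 ⟨l, hl, mem_filter.2 ⟨hx, h⟩⟩
    have h2 := (Finset.card_le_card h1).trans Finset.card_biUnion_le
    have h3 := Finset.sum_le_card_nsmul T _ B hB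
    rw [smul_eq_mul] at h3
    unfold sec at h3
    calc _ ≤ _ := h2
      _ ≤ _ := h3
      _ ≤ _ := Nat.mul_le_mul_right _ (by omega)
  have hkl : ∀ l ∈ T, sec (supp c) l < q ^ 2 + 1 →
      sec (supp c) l * (q ^ 2 + 1) ≤ (supp c).card + sec (supp c) l ^ 2 := by
    intro l hl hlt
    obtain ⟨Z, hZl, hZ⟩ := exists_zero (supp c) l (by rw [H.ord]; exact hlt)
    have hZ0 : c Z = 0 := by simpa [supp] using hZ
    obtain ⟨m0, hm0, hne0⟩ := exists_other (L := L) Z l hZl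
    have := H.kl c hcC Z l m0 hZl hm0 hne0 hZ0
    omega
  have hsec0 : ∀ l ∈ T, sec (supp c) l + sec S l + 1 ≤ q ^ 2 + 1 + T.card := by
    intro l hl
    have e1 : (supp c).filter (fun y => y ∈ l) ⊆
        (pts l \ S.filter (fun y => y ∈ l)) ∪ (T.erase l).biUnion (fun m => pts l ∩ pts m) := by
      intro y hy
      simp only [mem_filter] at hy
      by_contra hcon
      simp only [mem_union, mem_sdiff, mem_pts, mem_filter, mem_biUnion, mem_erase, mem_inter,
        not_or, not_and, not_exists] at hcon
      obtain ⟨h1, h2⟩ := hcon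
      have hyS : y ∈ S := by
        by_contra h
        exact h1 hy.2 (fun h' => absurd h' h)
      have : c y = 0 := by
        simp only [hc, Pi.sub_apply, indS, hyS, if_true, Finset.sum_apply]
        rw [Finset.sum_eq_single l]
        · simp [ind, hy.2]
        · intro m hm hne
          simp [ind, h2 m ⟨hne, hm⟩ hy.2]
        · intro h; exact absurd hl h
      simp [supp, this] at hy
    have e2 := (Finset.card_le_card e1).trans (Finset.card_union_le _ _)
    have e3 : ((T.erase l).biUnion (fun m => pts (P := P) l ∩ pts m)).card ≤ T.card - 1 := by
      refine Finset.card_biUnion_le.trans ?_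
      refine (Finset.sum_le_card_nsmul _ _ 1 fun m hm => card_inter_le ?_).trans ?_
      · exact (ne_of_mem_erase hm).symm
      · rw [card_erase_of_mem hl]; simp
    have e4 : S.filter (fun y => y ∈ l) ⊆ pts l := by
      intro y hy; rw [mem_pts]; exact (mem_filter.1 hy).2
    have e5 := Finset.card_sdiff_add_card_eq_card e4
    rw [card_pts, H.ord] at e5
    have e6 : 0 < T.card := Finset.card_pos.2 ⟨l, hl⟩
    unfold sec
    omega
  have step1 : ∀ l ∈ T, sec (supp c) l ≤ 5 := by
    obtain ⟨d, hd, hd2⟩ := H.long_bound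
    have hB : ∃ B, (∀ l ∈ T, sec (supp c) l ≤ B) ∧
        ((8 ≤ q ∧ B = 2 * q + 5) ∨ B = 2 * q + 3) := by
      rcases hd2 with ⟨h8, h⟩ | h
      · exact ⟨_, fun l hl => by have := hsec0 l hl; have := hd l hl; omega, Or.inl ⟨h8, rfl⟩⟩
      · exact ⟨_, fun l hl => by have := hsec0 l hl; have := hd l hl; omega, Or.inr rfl⟩
    obtain ⟨B, hB, hB2⟩ := hB
    intro l hl
    have hw1 := hw B hB
    have h1 := hB l hl
    have h2 := hkl l hl (by rcases hB2 with ⟨h8, h⟩ | h <;> nlinarith)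
    by_contra hcon
    have hs6 : 6 ≤ sec (supp c) l := by omega
    generalize sec (supp c) l = s at *
    have h3 : s * (q ^ 2 + 1) ≤ (q + 4) * B + s ^ 2 := by omega
    exact arith_clean q s B hs6 h1 h3 (by omega)
  have step2 : ∀ l ∈ T, sec (supp c) l ≤ 1 := by
    intro l hl
    have hw1 := hw 5 step1
    have h1 := step1 l hl
    have h2 := hkl l hl (by nlinarith)
    generalize sec (supp c) l = s at *
    interval_cases s <;> first | omega | nlinarith
  have step3 : ∀ l ∈ T, sec (supp c) l ≤ 0 := by
    intro l hl
    have hw1 := hw 1 step2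
    have h1 := step2 l hl
    have h2 := hkl l hl (by nlinarith)
    generalize sec (supp c) l = s at *
    interval_cases s <;> first | omega | nlinarith
  have h0 := hw 0 step3
  rw [mul_zero, Nat.le_zero, Finset.card_eq_zero] at h0
  have hc0 : c = 0 := by
    ext x
    by_contra hcon
    have : x ∈ supp c := by simp [supp]; exact hcon
    rw [h0] at this
    simp at this
  rw [hc, sub_eq_zero] at hc0
  exact hc0

theorem Core.card_mod (H : Core L p q C S) : (longs L q S).card % p = 1 := by
  have := Fact.mk H.hp
  have hq4 := H.hq4
  obtain ⟨l0⟩ : Nonempty L := by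
    obtain ⟨x, -⟩ := @ProjectivePlane.exists_config P L _ _
    obtain ⟨l, hl⟩ : (thru (L := L) x).Nonempty := by rw [← Finset.card_pos, card_thru]; omega
    exact ⟨l⟩
  have h1 : ∑ x ∈ pts (P := P) l0, indS p S x = (sec S l0 : ZMod p) := by
    simp only [indS, sum_boole, sec]
    congr 2
    ext x; simp [mem_pts, and_comm]
  have h2 : ∀ l : L, ∑ x ∈ pts (P := P) l0, ind p l x = 1 := by
    intro l
    simp only [ind, sum_boole]
    by_cases h : l0 = l
    · subst h
      have : (pts (P := P) l0).filter (fun x => x ∈ l0) = pts l0 := by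
        ext x; simp [mem_pts]
      rw [this, card_pts, H.ord]
      obtain ⟨a, ha⟩ := H.hpq
      rw [ha]; simp
    · have : ((pts (P := P) l0).filter (fun x => x ∈ l)).card = 1 := by
        apply le_antisymm
        · refine (Finset.card_le_card ?_).trans (card_inter_le (P := P) h)
          intro x; simp [mem_pts]
        · obtain ⟨x, hx1, hx2⟩ := exists_inter (P := P) h
          exact Finset.card_pos.2 ⟨x, by simp [mem_pts, hx1, hx2]⟩
      rw [this]; simp
  rw [H.clean] at h1
  simp only [Finset.sum_apply] at h1
  rw [Finset.sum_comm] at h1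
  simp only [h2, sum_const, nsmul_eq_mul, mul_one] at h1
  have h3 := (ZMod.natCast_eq_natCast_iff' _ _ _).1 h1
  rw [h3, H.modp]

theorem Core.weight_lower (H : Core L p q C S) :
    (longs L q S).card * (q ^ 2 + 2) ≤ S.card + (longs L q S).card ^ 2 := by
  have := Fact.mk H.hp
  set T := longs L q S with hT
  let U : L → Finset P := fun l => (pts l).filter (fun x => ∀ m ∈ T, x ∈ m → m = l)
  have hU : ∀ l ∈ T, U l ⊆ S := by
    intro l hl x hx
    simp only [U, mem_filter, mem_pts] at hx
    by_contra hxS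
    have h1 := congrFun H.clean x
    simp only [indS, hxS, if_false, Finset.sum_apply] at h1
    rw [← hT, Finset.sum_eq_single l] at h1
    · simp [ind, hx.1] at h1
    · intro m hm hne
      simp only [ind, ite_eq_right_iff]
      intro h; exact absurd (hx.2 m hm h) hne
    · intro h; exact absurd hl h
  have hUc : ∀ l ∈ T, q ^ 2 + 2 ≤ (U l).card + T.card := by
    intro l hl
    have e1 : pts l ⊆ U l ∪ (T.erase l).biUnion (fun m => pts l ∩ pts m) := by
      intro y hy
      by_contra hcon
      simp only [U, mem_union, mem_filter, mem_biUnion, mem_erase, mem_inter, not_or, not_and,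
        not_exists, hy, true_and] at hcon
      apply hcon.1
      intro m hm hy2
      by_contra hne
      exact hcon.2 m ⟨hne, hm⟩ ((mem_pts _ _).2 hy2)
    have e2 := (Finset.card_le_card e1).trans (Finset.card_union_le _ _)
    have e3 : ((T.erase l).biUnion (fun m => pts (P := P) l ∩ pts m)).card ≤ T.card - 1 := by
      refine Finset.card_biUnion_le.trans ?_
      refine (Finset.sum_le_card_nsmul _ _ 1 fun m hm => card_inter_le ?_).trans ?_
      · exact (ne_of_mem_erase hm).symm
      · rw [card_erase_of_mem hl]; simp
    have e6 : 0 < T.card := Finset.card_pos.2 ⟨l, hl⟩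
    rw [card_pts, H.ord] at e2
    omega
  have hdis : (T.biUnion U).card = ∑ l ∈ T, (U l).card := by
    refine Finset.card_biUnion ?_
    intro l hl m hm hne
    rw [Function.onFun, Finset.disjoint_left]
    intro x hx hx'
    simp only [U, mem_filter, mem_pts] at hx hx'
    exact hne (hx'.2 l hl hx.1)
  have h1 : (T.biUnion U).card ≤ S.card :=
    Finset.card_le_card (Finset.biUnion_subset.2 hU)
  have h2 : T.card * (q ^ 2 + 2) ≤ ∑ l ∈ T, ((U l).card + T.card) := by
    rw [← smul_eq_mul]; exact Finset.card_nsmul_le_sum _ _ _ hUc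
  rw [Finset.sum_add_distrib, ← hdis, sum_const, smul_eq_mul] at h2
  nlinarith

theorem Core.main (H : Core L p q C S) :
    ∃ T : Finset L, T.card ≤ q + 1 ∧ indS p S = ∑ l ∈ T, ind p l := by
  refine ⟨longs L q S, ?_, H.clean⟩
  have hq4 := H.hq4
  have h1 := H.card_long2
  have h2 := H.card_mod
  have h3 := H.weight_lower
  have h4 := H.size2
  obtain ⟨a, ha⟩ := H.hpq
  have hp2 := H.hp.two_le
  generalize (longs L q S).card = k at *
  by_contra hcon
  obtain ⟨j, hj⟩ : ∃ j, k = q + j := ⟨k - q, by omega⟩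
  have hj2 : j % p = 1 := by
    rw [hj, ha, Nat.mul_add_mod] at h2; exact h2
  by_cases hp : p = 2
  · have h8 := H.hq8 hp
    subst hp
    have : j = 3 := by omega
    subst this; subst hj
    nlinarith
  · have hj4 : j = 4 := by
      have h5 : j ≤ 4 := by omega
      have h6 : 2 ≤ j := by omega
      have h7 := Nat.div_add_mod j p
      rcases Nat.lt_or_ge j p with h | h
      · rw [Nat.mod_eq_of_lt h] at hj2; omega
      · by_contra h8
        have : p = 3 := by omega
        subst this
        omega
    subst hj4; subst hj
    nlinarith
end QHCore

namespace QHGeom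
open Module
open scoped Classical Polynomial
set_option linter.unusedSectionVars false
set_option linter.unusedVariables false

variable {F : Type} [Field F] [Fintype F] {n : ℕ}

instance finitePt : Finite (ProjPoint F n) := by
  unfold ProjPoint; infer_instance

noncomputable instance fintypePt : Fintype (ProjPoint F n) := Fintype.ofFinite _

/-- The point spanned by a nonzero vector. -/
def pt (v : Fin n → F) (hv : v ≠ 0) : ProjPoint F n :=
  ⟨Submodule.span F {v}, finrank_span_singleton hv⟩

theorem pt_le (v : Fin n → F) (hv : v ≠ 0) (W : Submodule F (Fin n → F)) :
    (pt v hv).1 ≤ W ↔ v ∈ W := by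
  simp [pt]

theorem exists_pt (P : ProjPoint F n) : ∃ v, ∃ hv : v ≠ 0, P = pt v hv := by
  obtain ⟨v, hv, h⟩ := finrank_eq_one_iff'.1 P.2
  have hv' : (v : Fin n → F) ≠ 0 := by simpa using hv
  refine ⟨v, hv', Subtype.ext ?_⟩
  apply le_antisymm
  · intro w hw
    obtain ⟨c, hc⟩ := h ⟨w, hw⟩
    have : w = c • (v : Fin n → F) := by rw [← Submodule.coe_smul, hc]
    exact Submodule.mem_span_singleton.2 ⟨c, this.symm⟩
  · simp [pt]

theorem pt_eq (u v : Fin n → F) (hu : u ≠ 0) (hv : v ≠ 0) (h : pt u hu = pt v hv) :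
    ∃ z : F, z ≠ 0 ∧ z • u = v := by
  have h1 : Submodule.span F {u} = Submodule.span F {v} := congrArg Subtype.val h
  obtain ⟨z, hz⟩ := Submodule.span_singleton_eq_span_singleton.1 h1
  exact ⟨z, z.ne_zero, hz⟩

theorem pt_smul (u v : Fin n → F) (hu : u ≠ 0) (hv : v ≠ 0) (z : F) (h : z • u = v) :
    pt u hu = pt v hv := by
  have hz : z ≠ 0 := by rintro rfl; simp at h; exact hv h.symm
  apply Subtype.ext
  exact Submodule.span_singleton_eq_span_singleton.2 ⟨Units.mk0 z hz, h⟩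

theorem mom_line (α β γ : F) (j : ℕ) : ∃ M : F[X], M.natDegree ≤ j ∧
    ∀ y, M.eval y = ∑ x, (if x * α + y * β + γ = 0 then (1 : F) else 0) * x ^ j := by
  by_cases hα : α = 0
  · subst hα
    by_cases ht : ∑ x : F, x ^ j = 0
    · refine ⟨0, by simp, fun y => ?_⟩
      simp only [mul_zero, zero_add, ← Finset.mul_sum, ht]
      simp
    · have hj : Fintype.card F - 1 ≤ j := by
        by_contra h
        exact ht (FiniteField.sum_pow_lt_card_sub_one F j (by omega))
      refine ⟨Polynomial.C (∑ x : F, x ^ j) *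
        (1 - (Polynomial.C β * Polynomial.X + Polynomial.C γ) ^ (Fintype.card F - 1)), ?_, ?_⟩
      · refine (Polynomial.natDegree_C_mul_le _ _).trans ?_
        refine (Polynomial.natDegree_sub_le _ _).trans ?_
        rw [Polynomial.natDegree_one]
        refine max_le (Nat.zero_le _) ?_
        refine (Polynomial.natDegree_pow_le_of_le _ (Polynomial.natDegree_linear_le)).trans ?_
        omega
      · intro y
        simp only [mul_zero, zero_add, ← Finset.mul_sum]
        simp only [Polynomial.eval_mul, Polynomial.eval_C, Polynomial.eval_sub,
          Polynomial.eval_one, Polynomial.eval_pow, Polynomial.eval_add, Polynomial.eval_X]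
        split_ifs with h
        · have h' : β * y + γ = 0 := by rw [← h]; ring
          have : Fintype.card F - 1 ≠ 0 := by have := Fintype.one_lt_card (α := F); omega
          rw [h', zero_pow this]; ring
        · have h' : β * y + γ ≠ 0 := by intro h2; apply h; rw [← h2]; ring
          rw [FiniteField.pow_card_sub_one_eq_one _ h']; ring
  · refine ⟨(Polynomial.C (-β / α) * Polynomial.X + Polynomial.C (-γ / α)) ^ j, ?_, ?_⟩
    · refine (Polynomial.natDegree_pow_le_of_le _ (Polynomial.natDegree_linear_le)).trans ?_
      omega
    · intro y
      rw [Finset.sum_eq_single (-β / α * y + -γ / α)]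
      · have : (-β / α * y + -γ / α) * α + y * β + γ = 0 := by field_simp; ring
        simp [this]
      · intro x _ hx
        rw [if_neg, zero_mul]
        intro h
        apply hx
        field_simp
        linear_combination h
      · simp

theorem hyp_ker (hn : 1 ≤ n) (H : Submodule F (Fin n → F)) (hH : finrank F H = n - 1) :
    ∃ φ : (Fin n → F) →ₗ[F] F, φ ≠ 0 ∧ H = LinearMap.ker φ := by
  have hlt : H < ⊤ := by
    rw [lt_top_iff_ne_top]
    rintro rfl
    simp at hH; omega
  obtain ⟨φ, h0, hle⟩ := Submodule.exists_le_ker_of_lt_top H hlt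
  refine ⟨φ, h0, Submodule.eq_of_le_of_finrank_le hle ?_⟩
  have h1 := LinearMap.finrank_range_add_finrank_ker φ
  have h2 : 0 < finrank F (LinearMap.range φ) := by
    rw [Module.finrank_pos_iff, Submodule.nontrivial_iff_ne_bot]
    intro h; exact h0 (LinearMap.range_eq_bot.1 h)
  simp at h1
  omega

/-- Number of nonzero positions of `c` in the subspace `W`. -/
noncomputable def wt {p : ℕ} (c : ProjPoint F n → ZMod p) (W : Submodule F (Fin n → F)) : ℕ :=
  (Finset.univ.filter (fun P : ProjPoint F n => P.1 ≤ W ∧ c P ≠ 0)).card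

theorem moments (p : ℕ) [Fact p.Prime] [CharP F p] (hn : 1 ≤ n) (c : ProjPoint F n → ZMod p)
    (hc : c ∈ hypCode F p n) (e1 e2 e3 : Fin n → F) (hv : ∀ x y : F, x • e1 + y • e2 + e3 ≠ 0)
    (j : ℕ) : ∃ M : F[X], M.natDegree ≤ j ∧
    ∀ y, M.eval y = ∑ x, ZMod.castHom (dvd_refl p) F (c (pt _ (hv x y))) * x ^ j := by
  unfold hypCode at hc
  induction hc using Submodule.span_induction with
  | mem v h =>
    obtain ⟨H, hH, rfl⟩ := h
    obtain ⟨φ, -, rfl⟩ := hyp_ker hn H hH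
    obtain ⟨M, h1, h2⟩ := mom_line (φ e1) (φ e2) (φ e3) j
    refine ⟨M, h1, fun y => ?_⟩
    rw [h2]
    refine Finset.sum_congr rfl fun x _ => ?_
    congr 1
    simp only [charVec, Set.indicator, pointsIn, Set.mem_ofPred_eq, pt_le, LinearMap.mem_ker,
      map_add, map_smul, smul_eq_mul, Pi.one_apply]
    split_ifs <;> simp
  | zero => exact ⟨0, by simp, by simp⟩
  | add a b _ _ ha hb =>
    obtain ⟨M, h1, h2⟩ := ha
    obtain ⟨N, h3, h4⟩ := hb
    refine ⟨M + N, (Polynomial.natDegree_add_le _ _).trans (max_le h1 h3), fun y => ?_⟩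
    simp only [Polynomial.eval_add, h2, h4, Pi.add_apply, map_add, add_mul,
      Finset.sum_add_distrib]
  | smul a b _ hb =>
    obtain ⟨M, h1, h2⟩ := hb
    refine ⟨Polynomial.C (ZMod.castHom (dvd_refl p) F a) * M,
      (Polynomial.natDegree_C_mul_le _ _).trans h1, fun y => ?_⟩
    simp only [Polynomial.eval_mul, Polynomial.eval_C, h2, Pi.smul_apply, smul_eq_mul, map_mul,
      Finset.mul_sum, mul_assoc]

theorem kl_coords (p : ℕ) [Fact p.Prime] [CharP F p] (hn : 1 ≤ n) (c : ProjPoint F n → ZMod p)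
    (hc : c ∈ hypCode F p n) (e1 e2 e3 : Fin n → F)
    (hli : ∀ x y z : F, x • e1 + y • e2 + z • e3 = 0 → x = 0 ∧ y = 0 ∧ z = 0)
    (he1 : e1 ≠ 0) (h0 : c (pt e1 he1) = 0) (l m W : Submodule F (Fin n → F))
    (hl : ∀ v, v ∈ l ↔ ∃ x z : F, v = x • e1 + z • e3)
    (hm : ∀ v, v ∈ m ↔ ∃ x y : F, v = x • e1 + y • e2)
    (hmW : m ≤ W) (he : e1 ∈ W ∧ e2 ∈ W ∧ e3 ∈ W) :
    wt c l * (Fintype.card F + 1) + wt c m ≤ wt c W + wt c l ^ 2 := by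
  have hv : ∀ x y : F, x • e1 + y • e2 + e3 ≠ 0 := by
    intro x y h
    have := (hli x y 1 (by simpa using h)).2.2
    exact one_ne_zero this
  have huniq : ∀ x y x' y' z : F, z • (x • e1 + y • e2 + e3) = x' • e1 + y' • e2 + e3 →
      x = x' ∧ y = y' := by
    intro x y x' y' z h
    have h1 : (z * x - x') • e1 + (z * y - y') • e2 + (z - 1) • e3 = 0 := by
      simp only [sub_smul, mul_smul, one_smul]
      simp only [smul_add] at h
      rw [← sub_eq_zero] at h
      rw [← h]; abel
    obtain ⟨a, b, d⟩ := hli _ _ _ h1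
    have hz : z = 1 := by linear_combination d
    subst hz
    exact ⟨by linear_combination a, by linear_combination b⟩
  set σ := ZMod.castHom (dvd_refl p) F with hσ
  have hσ0 : ∀ a : ZMod p, σ a ≠ 0 ↔ a ≠ 0 := fun a => by
    rw [Ne, map_eq_zero_iff σ σ.injective]
  let f : F × F → ProjPoint F n := fun u => pt _ (hv u.1 u.2)
  have hf : Function.Injective f := by
    rintro ⟨x, y⟩ ⟨x', y'⟩ h
    obtain ⟨z, -, hz⟩ := pt_eq _ _ _ _ h
    obtain ⟨a, b⟩ := huniq _ _ _ _ _ hz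
    simp only at a b
    rw [a, b]
  choose M hM1 hM2 using moments p hn c hc e1 e2 e3 hv
  let g : F → F → F := fun y x => σ (c (f (x, y)))
  let N : F → ℕ := fun y => (Finset.univ.filter (fun x => g y x ≠ 0)).card
  have hs : N 0 = wt c l := by
    unfold wt
    refine Finset.card_bij (fun x _ => f (x, 0)) ?_ ?_ ?_
    · intro x hx
      simp only [Finset.mem_filter, Finset.mem_univ, true_and, g, hσ0] at hx ⊢
      refine ⟨(pt_le _ _ _).2 ((hl _).2 ⟨x, 1, ?_⟩), hx⟩
      simp
    · intro x _ x' _ h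
      have := hf h
      simpa using this
    · intro P hP
      simp only [Finset.mem_filter, Finset.mem_univ, true_and] at hP
      obtain ⟨v, hv0, rfl⟩ := exists_pt P
      obtain ⟨x, z, h⟩ := (hl v).1 ((pt_le _ _ _).1 hP.1)
      by_cases hz : z = 0
      · exfalso
        apply hP.2
        rw [← h0]
        congr 1
        symm
        refine pt_smul _ _ _ _ x ?_
        rw [h, hz]; simp
      · have he : f (z⁻¹ * x, 0) = pt v hv0 := by
          refine pt_smul _ _ _ _ z ?_
          rw [h]
          simp only [smul_add, smul_smul, zero_smul, smul_zero, add_zero]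
          rw [mul_inv_cancel_left₀ hz]
        refine ⟨z⁻¹ * x, ?_, he⟩
        simp only [Finset.mem_filter, Finset.mem_univ, true_and, g, hσ0]
        rw [he]; exact hP.2
  have hw : ∑ y, N y + wt c m ≤ wt c W := by
    let T : Finset (F × F) := Finset.univ.filter (fun u => c (f u) ≠ 0)
    have hT : T.card = ∑ y, N y := by
      rw [Finset.card_eq_sum_card_fiberwise (f := Prod.snd) (t := Finset.univ)
        (fun _ _ => Finset.mem_coe.2 (Finset.mem_univ _))]
      refine Finset.sum_congr rfl fun y _ => ?_
      symm
      refine Finset.card_bij (fun x _ => (x, y)) ?_ ?_ ?_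
      · intro x hx
        simpa [T, g, hσ0] using hx
      · intro x _ x' _ h; simpa using h
      · rintro ⟨x, y'⟩ h
        simp only [T, Finset.mem_filter, Finset.mem_univ, true_and] at h
        obtain ⟨h1, rfl⟩ := h
        exact ⟨x, by simpa [g, hσ0] using h1, rfl⟩
    rw [← hT, ← Finset.card_image_of_injective T hf]
    unfold wt
    rw [← Finset.card_union_of_disjoint]
    · apply Finset.card_le_card
      intro P hP
      simp only [Finset.mem_union, Finset.mem_image, T, Finset.mem_filter, Finset.mem_univ,
        true_and] at hP ⊢
      rcases hP with ⟨u, h1, rfl⟩ | h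
      · refine ⟨(pt_le _ _ _).2 ?_, h1⟩
        exact W.add_mem (W.add_mem (W.smul_mem _ he.1) (W.smul_mem _ he.2.1)) he.2.2
      · exact ⟨h.1.trans hmW, h.2⟩
    · rw [Finset.disjoint_left]
      intro P hP hP2
      simp only [Finset.mem_image, T, Finset.mem_filter, Finset.mem_univ, true_and] at hP hP2
      obtain ⟨u, -, rfl⟩ := hP
      obtain ⟨x, y, h⟩ := (hm _).1 ((pt_le _ _ _).1 hP2.1)
      have h1 : (u.1 - x) • e1 + (u.2 - y) • e2 + (1 : F) • e3 = 0 := by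
        simp only [sub_smul, one_smul]
        rw [← sub_eq_zero] at h
        rw [← h]; abel
      exact one_ne_zero (hli _ _ _ h1).2.2
  have hkl := kl_affine g M hM1 hM2 0 (N 0) rfl
  have h3 : ∑ y : F, N 0 ≤ ∑ y, (N 0 - N y) + ∑ y, N y := by
    rw [← Finset.sum_add_distrib]
    exact Finset.sum_le_sum fun y _ => by omega
  rw [Finset.sum_const, Finset.card_univ, smul_eq_mul] at h3
  change ∑ y, (N 0 - N y) ≤ _ at hkl
  rw [← hs]
  have h4 : N 0 * (N 0 - 1) + N 0 = N 0 ^ 2 := by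
    rcases Nat.eq_zero_or_pos (N 0) with h | h
    · simp [h]
    · obtain ⟨k, hk⟩ := Nat.exists_eq_add_of_le h
      rw [hk]; simp; ring
  nlinarith

end QHGeom

namespace QHGeom
open Module
open scoped Classical
set_option linter.unusedSectionVars false
set_option linter.unusedVariables false

variable {F : Type} [Field F] [Fintype F] {n : ℕ}

theorem line_coords (l : Submodule F (Fin n → F)) (hl : finrank F l = 2) (e1 : Fin n → F)
    (h1 : e1 ∈ l) (h0 : e1 ≠ 0) :
    ∃ e3 ∈ l, e3 ∉ Submodule.span F {e1} ∧ ∀ v, v ∈ l ↔ ∃ x z : F, v = x • e1 + z • e3 := by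
  have hlt : ∃ e3 ∈ l, e3 ∉ Submodule.span F {e1} := by
    by_contra! h
    have h2 : l ≤ Submodule.span F {e1} := h
    have := Submodule.finrank_mono h2
    rw [finrank_span_singleton h0] at this
    omega
  obtain ⟨e3, he3, hn3⟩ := hlt
  refine ⟨e3, he3, hn3, ?_⟩
  have hle : Submodule.span F {e1, e3} ≤ l := by
    rw [Submodule.span_le]
    rintro v (rfl | rfl)
    · exact h1
    · exact he3
  have hlt : Submodule.span F {e1} < Submodule.span F {e1, e3} := by
    refine lt_of_le_of_ne (Submodule.span_mono (by simp)) ?_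
    intro h
    apply hn3
    rw [h]
    exact Submodule.subset_span (by simp)
  have hfr := Submodule.finrank_lt_finrank_of_lt hlt
  rw [finrank_span_singleton h0] at hfr
  have heq := Submodule.eq_of_le_of_finrank_le hle (by omega)
  intro v
  rw [← heq, Submodule.mem_span_pair]
  constructor
  · rintro ⟨a, b, h⟩; exact ⟨a, b, h.symm⟩
  · rintro ⟨a, b, h⟩; exact ⟨a, b, h.symm⟩

theorem kl_geom (p : ℕ) [Fact p.Prime] [CharP F p] (hn : 1 ≤ n) (c : ProjPoint F n → ZMod p)
    (hc : c ∈ hypCode F p n) (Z : ProjPoint F n) (l m W : Submodule F (Fin n → F))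
    (hl : finrank F l = 2) (hm : finrank F m = 2) (hlm : l ≠ m) (hZl : Z.1 ≤ l) (hZm : Z.1 ≤ m)
    (hlW : l ≤ W) (hmW : m ≤ W) (h0 : c Z = 0) :
    wt c l * (Fintype.card F + 1) + wt c m ≤ wt c W + wt c l ^ 2 := by
  obtain ⟨e1, he1, rfl⟩ := exists_pt Z
  rw [pt_le] at hZl hZm
  obtain ⟨e3, he3, hn3, hl3⟩ := line_coords l hl e1 hZl he1
  obtain ⟨e2, he2, hn2, hm2⟩ := line_coords m hm e1 hZm he1
  refine kl_coords p hn c hc e1 e2 e3 ?_ he1 h0 l m W hl3 hm2 hmW ⟨hlW hZl, hmW he2, hlW he3⟩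
  intro x y z h
  have hz : z = 0 := by
    by_contra hz
    have h3 : e3 = -(z⁻¹ • (x • e1 + y • e2)) := by
      rw [eq_neg_iff_add_eq_zero, ← smul_right_injective _ hz |>.eq_iff]
      simp only [smul_add, smul_smul, mul_inv_cancel_left₀ hz, smul_zero]
      rw [← h]; abel
    have h4 : e3 ∈ m := by
      rw [h3]
      exact m.neg_mem (m.smul_mem _ (m.add_mem (m.smul_mem _ hZm) (m.smul_mem _ he2)))
    apply hlm
    apply Submodule.eq_of_le_of_finrank_le _ (by omega)
    intro v hv
    obtain ⟨a, b, rfl⟩ := (hl3 v).1 hv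
    exact m.add_mem (m.smul_mem _ hZm) (m.smul_mem _ h4)
  subst hz
  simp only [zero_smul, add_zero] at h
  have hy : y = 0 := by
    by_contra hy
    apply hn2
    rw [Submodule.mem_span_singleton]
    refine ⟨-(y⁻¹ * x), ?_⟩
    rw [← smul_right_injective _ hy |>.eq_iff]
    simp only [smul_smul, mul_neg, mul_inv_cancel_left₀ hy]
    rw [neg_smul, neg_eq_iff_add_eq_zero, h]
  subst hy
  simp only [zero_smul, add_zero, smul_eq_zero, he1, or_false] at h
  exact ⟨h, rfl, rfl⟩

/-- Number of points of a subspace. -/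
noncomputable def cnt (W : Submodule F (Fin n → F)) : ℕ :=
  (Finset.univ.filter (fun P : ProjPoint F n => P.1 ≤ W)).card

theorem card_mem (W : Submodule F (Fin n → F)) :
    (Finset.univ.filter (fun v => v ∈ W)).card = Fintype.card F ^ finrank F W := by
  rw [← Fintype.card_subtype, ← Module.card_eq_pow_finrank (K := F) (V := W)]

theorem card_mem_ne (W : Submodule F (Fin n → F)) :
    (Finset.univ.filter (fun v => v ∈ W ∧ v ≠ 0)).card + 1 = Fintype.card F ^ finrank F W := by
  rw [← card_mem]
  have : Finset.univ.filter (fun v => v ∈ W ∧ v ≠ 0) =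
      (Finset.univ.filter (fun v => v ∈ W)).erase 0 := by
    ext v; simp [and_comm]
  rw [this, Finset.card_erase_add_one]
  simp

theorem cnt_mul (W : Submodule F (Fin n → F)) :
    cnt W * (Fintype.card F - 1) + 1 = Fintype.card F ^ finrank F W := by
  rw [← card_mem_ne]
  congr 1
  have h : Finset.univ.filter (fun v => v ∈ W ∧ v ≠ 0) =
      (Finset.univ.filter (fun P : ProjPoint F n => P.1 ≤ W)).biUnion
        (fun P => Finset.univ.filter (fun v => v ∈ P.1 ∧ v ≠ 0)) := by
    ext v
    simp only [Finset.mem_filter, Finset.mem_univ, true_and, Finset.mem_biUnion]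
    constructor
    · rintro ⟨h1, h2⟩
      exact ⟨pt v h2, (pt_le _ _ _).2 h1, Submodule.mem_span_singleton_self v, h2⟩
    · rintro ⟨P, h1, h2, h3⟩
      exact ⟨h1 h2, h3⟩
  rw [h, Finset.card_biUnion]
  · rw [Finset.sum_const_nat (m := Fintype.card F - 1)]
    · rfl
    · intro P _
      have := card_mem_ne P.1
      rw [P.2, pow_one] at this
      omega
  · intro P _ R _ hne
    rw [Function.onFun, Finset.disjoint_left]
    intro v hv hv2
    simp only [Finset.mem_filter, Finset.mem_univ, true_and] at hv hv2
    apply hne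
    have key : ∀ T : ProjPoint F n, v ∈ T.1 → T = pt v hv.2 := by
      intro T hT
      symm
      apply Subtype.ext
      exact Submodule.eq_of_le_of_finrank_eq ((pt_le _ _ _).2 hT) ((pt v hv.2).2.trans T.2.symm)
    rw [key P hv.1, key R hv2.1]

theorem cnt_two (W : Submodule F (Fin n → F)) (h : finrank F W = 2) :
    cnt W = Fintype.card F + 1 := by
  have h1 := cnt_mul W
  rw [h] at h1
  have h2 := Fintype.one_lt_card (α := F)
  obtain ⟨k, hk⟩ := Nat.exists_eq_add_of_lt h2
  rw [hk] at h1 ⊢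
  simp only [Nat.add_sub_cancel] at h1
  apply Nat.eq_of_mul_eq_mul_right (show 0 < 1 + k by omega)
  nlinarith

theorem cnt_three (W : Submodule F (Fin n → F)) (h : finrank F W = 3) :
    cnt W = Fintype.card F ^ 2 + Fintype.card F + 1 := by
  have h1 := cnt_mul W
  rw [h] at h1
  have h2 := Fintype.one_lt_card (α := F)
  obtain ⟨k, hk⟩ := Nat.exists_eq_add_of_lt h2
  rw [hk] at h1 ⊢
  simp only [Nat.add_sub_cancel] at h1
  apply Nat.eq_of_mul_eq_mul_right (show 0 < 1 + k by omega)
  nlinarith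

theorem cnt_mod (p : ℕ) [Fact p.Prime] [CharP F p] (W : Submodule F (Fin n → F))
    (h : 1 ≤ finrank F W) : (cnt W : ZMod p) = 1 := by
  have h1 := cnt_mul W
  have h2 := Fintype.one_lt_card (α := F)
  have h3 : ((Fintype.card F : ℕ) : ZMod p) = 0 := by
    rw [ZMod.natCast_eq_zero_iff]
    exact (CharP.cast_eq_zero_iff F p _).1 (FiniteField.cast_card_eq_zero F)
  have h4 := congrArg (Nat.cast : ℕ → ZMod p) h1
  push_cast [Nat.cast_sub h2.le] at h4
  rw [h3, zero_pow (by omega)] at h4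
  linear_combination -h4

theorem secant_eq (V : Set (ProjPoint F n)) (W : Submodule F (Fin n → F)) :
    secant F n V W = (Finset.univ.filter (fun P : ProjPoint F n => P.1 ≤ W ∧ P ∈ V)).card := by
  unfold secant
  rw [← Set.ncard_coe_finset]
  congr 1
  ext P
  simp [pointsIn, and_comm]

theorem wt_charVec (p : ℕ) [Fact p.Prime] (V : Set (ProjPoint F n))
    (W : Submodule F (Fin n → F)) : wt (charVec F p n V) W = secant F n V W := by
  rw [secant_eq, wt]
  congr 1
  ext P
  simp [charVec, Set.indicator]

theorem sum_charVec (p : ℕ) (V : Set (ProjPoint F n)) (W : Submodule F (Fin n → F)) :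
    ∑ P with P.1 ≤ W, charVec F p n V P = (secant F n V W : ZMod p) := by
  rw [secant_eq]
  simp only [charVec, Set.indicator, Pi.one_apply, Finset.sum_boole, Finset.filter_filter]

theorem secant_top (V : Set (ProjPoint F n)) : secant F n V ⊤ = V.ncard := by
  unfold secant; congr 1; ext P; simp [pointsIn]

theorem sum_code (p : ℕ) [Fact p.Prime] [CharP F p] (hn : 1 ≤ n) (c : ProjPoint F n → ZMod p)
    (hc : c ∈ hypCode F p n) (W W' : Submodule F (Fin n → F)) (hW : 2 ≤ finrank F W)
    (hW' : 2 ≤ finrank F W') :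
    ∑ P with P.1 ≤ W, c P = ∑ P with P.1 ≤ W', c P := by
  unfold hypCode at hc
  induction hc using Submodule.span_induction with
  | mem v h =>
    obtain ⟨H, hH, rfl⟩ := h
    have key : ∀ U : Submodule F (Fin n → F), 2 ≤ finrank F U →
        ∑ P : ProjPoint F n with P.1 ≤ U, charVec F p n (pointsIn F n H) P = 1 := by
      intro U hU
      have h1 : 1 ≤ finrank F (H ⊓ U : Submodule F (Fin n → F)) := by
        have e1 := Submodule.finrank_sup_add_finrank_inf_eq H U
        have e2 := Submodule.finrank_le (H ⊔ U)
        simp at e2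
        omega
      rw [sum_charVec, secant_eq, ← cnt_mod p (H ⊓ U) h1, cnt]
      congr 2
      ext P; simp [pointsIn, and_comm]
    rw [key W hW, key W' hW']
  | zero => simp
  | add a b _ _ ha hb => simp only [Pi.add_apply, Finset.sum_add_distrib, ha, hb]
  | smul a b _ hb => simp only [Pi.smul_apply, ← Finset.smul_sum, hb]

theorem secant_mod (p q r : ℕ) [Fact p.Prime] [CharP F p] (hpq : p ∣ q) (hr : 3 ≤ r)
    (V : Set (ProjPoint F (r + 1))) (hV : IsQuasiHermitian F q r V)
    (hcode : charVec F p (r + 1) V ∈ hypCode F p (r + 1)) (W : Submodule F (Fin (r + 1) → F))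
    (hW : 2 ≤ finrank F W) : secant F (r + 1) V W % p = 1 := by
  have h1 := sum_code p (by omega) _ hcode W ⊤ hW (by simp; omega)
  rw [sum_charVec, sum_charVec, secant_top] at h1
  have h2 : (V.ncard : ZMod p) = 1 := by
    have h3 := congrArg (Int.cast : ℤ → ZMod p) hV.1
    have hq0 : (q : ZMod p) = 0 := (ZMod.natCast_eq_zero_iff _ _).2 hpq
    push_cast at h3
    rw [hq0, zero_pow (by omega), zero_pow (by omega), zero_pow (by omega)] at h3
    have h4 : ((-1 : ZMod p) ^ r) * (-1) ^ r = 1 := by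
      rw [← mul_pow]; simp
    linear_combination -h3 + h4
  rw [h2] at h1
  have h3 : ((secant F (r + 1) V W : ℕ) : ZMod p) = ((1 : ℕ) : ZMod p) := by rw [h1]; simp
  have h4 := (ZMod.natCast_eq_natCast_iff' _ _ _).1 h3
  rw [h4, Nat.mod_eq_of_lt (Fact.out : p.Prime).one_lt]

end QHGeom

namespace QHGeom
open Module
open scoped Classical
set_option linter.unusedSectionVars false
set_option linter.unusedVariables false

variable {F : Type} [Field F] [Fintype F] {n : ℕ}

theorem inf_pt (W : Submodule F (Fin n → F)) (P : ProjPoint F n) (h : ¬ P.1 ≤ W) :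
    W ⊓ P.1 = ⊥ := by
  obtain ⟨v, hv, rfl⟩ := exists_pt P
  rw [pt_le] at h
  rw [Submodule.eq_bot_iff]
  rintro w ⟨h1, h2⟩
  obtain ⟨a, rfl⟩ := Submodule.mem_span_singleton.1 h2
  by_contra h3
  have ha : a ≠ 0 := by rintro rfl; simp at h3
  exact h ((W.smul_mem_iff ha).1 h1)

theorem finrank_sup_pt (W : Submodule F (Fin n → F)) (P : ProjPoint F n) (h : ¬ P.1 ≤ W) :
    finrank F (W ⊔ P.1 : Submodule F (Fin n → F)) = finrank F W + 1 := by
  have h1 := Submodule.finrank_sup_add_finrank_inf_eq W P.1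
  rw [inf_pt W P h, finrank_bot, P.2] at h1
  omega

theorem sup_symm (W : Submodule F (Fin n → F)) (P R : ProjPoint F n) (hP : ¬ P.1 ≤ W)
    (hR : ¬ R.1 ≤ W) (h : R.1 ≤ W ⊔ P.1) : P.1 ≤ W ⊔ R.1 := by
  have h1 : W ⊔ R.1 ≤ W ⊔ P.1 := sup_le le_sup_left h
  have h2 := Submodule.eq_of_le_of_finrank_eq h1
    ((finrank_sup_pt W R hR).trans (finrank_sup_pt W P hP).symm)
  rw [h2]; exact le_sup_right

theorem card_diff (A : ProjPoint F n → Prop) (m W : Submodule F (Fin n → F)) (h : m ≤ W) :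
    (Finset.univ.filter (fun P : ProjPoint F n => (A P ∧ ¬ P.1 ≤ m) ∧ P.1 ≤ W)).card +
      (Finset.univ.filter (fun P : ProjPoint F n => P.1 ≤ m ∧ A P)).card =
      (Finset.univ.filter (fun P : ProjPoint F n => P.1 ≤ W ∧ A P)).card := by
  rw [← Finset.card_union_of_disjoint]
  · congr 1
    ext P
    simp only [Finset.mem_union, Finset.mem_filter, Finset.mem_univ, true_and]
    constructor
    · rintro (h1 | h1)
      · exact ⟨h1.2, h1.1.1⟩
      · exact ⟨h1.1.trans h, h1.2⟩
    · intro h1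
      by_cases h2 : P.1 ≤ m
      · exact Or.inr ⟨h2, h1.2⟩
      · exact Or.inl ⟨⟨h1.2, h2⟩, h1.1⟩
  · rw [Finset.disjoint_left]
    intro P h1 h2
    simp only [Finset.mem_filter, Finset.mem_univ, true_and] at h1 h2
    exact h1.1.2 h2.1

theorem arith_avg (q r N s A : ℕ) (hq : 4 < q) (hr : 3 ≤ r) (hs : 1 ≤ s) (d : ℕ) (hd : d + s = N)
    (hN : (N : ℤ) * ((q : ℤ) ^ 2 - 1)
      = ((q : ℤ) ^ (r + 1) + (-1) ^ r) * ((q : ℤ) ^ r - (-1) ^ r))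
    (hA : A * (q ^ 2 - 1) + q ^ 4 = q ^ (2 * r + 2))
    (h : A * (q ^ 3 + 1) ≤ d * q ^ 4) : False := by
  obtain ⟨k, rfl⟩ := Nat.exists_eq_add_of_le hr
  have hq1 : 1 ≤ q ^ 2 := Nat.one_le_pow _ _ (by omega)
  subst hd
  zify [hq1] at *
  set x : ℤ := (q : ℤ) with hx
  set y : ℤ := x ^ k with hy
  have hy1 : 1 ≤ y := one_le_pow₀ (by linarith)
  have e1 : x ^ (3 + k + 1) = x ^ 4 * y := by rw [hy]; ring
  have e2 : x ^ (3 + k) = x ^ 3 * y := by rw [hy]; ring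
  have e3 : x ^ (2 * (3 + k) + 2) = x ^ 8 * y ^ 2 := by rw [hy]; ring
  rw [e1, e2] at hN
  rw [e3] at hA
  have hx2 : 0 < x ^ 2 - 1 := by nlinarith
  have h1 := mul_le_mul_of_nonneg_right h hx2.le
  have h2 : (x ^ 8 * y ^ 2 - x ^ 4) * (x ^ 3 + 1) ≤
      ((d + s) * (x ^ 2 - 1) - s * (x ^ 2 - 1)) * x ^ 4 := by
    rw [← hA]; nlinarith
  rw [hN] at h2
  have h3 : (x ^ 4 * y ^ 2 - 1) * (x ^ 3 + 1) ≤
      (x ^ 4 * y + (-1) ^ (3 + k)) * (x ^ 3 * y - (-1) ^ (3 + k)) - s * (x ^ 2 - 1) := by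
    have hx4 : 0 < x ^ 4 := by positivity
    refine le_of_mul_le_mul_right ?_ hx4
    calc _ = (x ^ 8 * y ^ 2 - x ^ 4) * (x ^ 3 + 1) := by ring
      _ ≤ _ := h2
  have h4 : x ^ 2 - 1 ≤ s * (x ^ 2 - 1) := by nlinarith
  have h5 : x ^ 3 * y ≤ x ^ 4 * y := by
    have : 0 < x ^ 3 * y := by positivity
    nlinarith
  have h6 : x ^ 4 * y ≤ x ^ 4 * y ^ 2 := by
    have : 0 < x ^ 4 := by positivity
    nlinarith [mul_nonneg this.le (mul_nonneg (by linarith : (0 : ℤ) ≤ y) (sub_nonneg.2 hy1))]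
  have h7 : x ^ 3 ≤ x ^ 3 * y := by
    have : 0 < x ^ 3 := by positivity
    nlinarith
  rcases neg_one_pow_eq_or ℤ (3 + k) with h8 | h8 <;> rw [h8] at h3 <;> nlinarith

theorem exists_small_plane (q r : ℕ) (hq4 : 4 < q) (hr : 3 ≤ r) (hF : Fintype.card F = q ^ 2)
    (V : Set (ProjPoint F (r + 1))) (hV : IsQuasiHermitian F q r V)
    (m : Submodule F (Fin (r + 1) → F)) (hm : finrank F m = 2)
    (hs : 1 ≤ secant F (r + 1) V m) :
    ∃ σ : Submodule F (Fin (r + 1) → F), m ≤ σ ∧ finrank F σ = 3 ∧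
      secant F (r + 1) V σ ≤ q ^ 3 + secant F (r + 1) V m := by
  by_contra! hcon
  let A : Finset (ProjPoint F (r + 1)) := Finset.univ.filter (fun P => ¬ P.1 ≤ m)
  let B : Finset (ProjPoint F (r + 1)) := Finset.univ.filter (fun P => P ∈ V ∧ ¬ P.1 ≤ m)
  have hA : A.card * (q ^ 2 - 1) + q ^ 4 = q ^ (2 * r + 2) := by
    have h1 := card_diff (fun _ => True) m ⊤ le_top
    simp only [true_and, and_true, le_top] at h1
    have h2 := cnt_mul m
    have h3 := cnt_mul (⊤ : Submodule F (Fin (r + 1) → F))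
    have h4 : cnt (⊤ : Submodule F (Fin (r + 1) → F)) = A.card + cnt m := by
      simp only [cnt, A, le_top]
      rw [h1]
    rw [h4, hF] at h3
    rw [hF, hm] at h2
    simp only [finrank_top, finrank_fintype_fun_eq_card, Fintype.card_fin] at h3
    have e1 : (q ^ 2) ^ 2 = q ^ 4 := by ring
    have e2 : (q ^ 2) ^ (r + 1) = q ^ (2 * r + 2) := by rw [← pow_mul]; ring_nf
    rw [e1] at h2
    rw [e2, add_mul] at h3
    omega
  have hB : B.card + secant F (r + 1) V m = V.ncard := by
    have h1 := card_diff (fun P => P ∈ V) m ⊤ le_top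
    rw [← secant_eq, ← secant_eq, secant_top] at h1
    simpa only [le_top, and_true] using h1
  have hdc := Finset.sum_card_bipartiteAbove_eq_sum_card_bipartiteBelow
    (s := A) (t := B) (fun P R => R.1 ≤ m ⊔ P.1)
  have hlow : A.card * (q ^ 3 + 1) ≤
      ∑ P ∈ A, (Finset.bipartiteAbove (fun P R => R.1 ≤ m ⊔ P.1) B P).card := by
    rw [← smul_eq_mul]
    refine Finset.card_nsmul_le_sum _ _ _ fun P hP => ?_
    simp only [A, Finset.mem_filter, Finset.mem_univ, true_and] at hP
    have h1 := hcon (m ⊔ P.1) le_sup_left (by rw [finrank_sup_pt m P hP, hm])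
    have h2 := card_diff (fun P => P ∈ V) m (m ⊔ P.1) le_sup_left
    rw [← secant_eq, ← secant_eq] at h2
    simp only [Finset.bipartiteAbove, B, Finset.filter_filter]
    omega
  have hup : ∑ R ∈ B, (Finset.bipartiteBelow (fun P R => R.1 ≤ m ⊔ P.1) A R).card =
      B.card * q ^ 4 := by
    refine Finset.sum_const_nat fun R hR => ?_
    simp only [B, Finset.mem_filter, Finset.mem_univ, true_and] at hR
    have h2 := card_diff (fun P => True) m (m ⊔ R.1) le_sup_left
    have h3 := cnt_three (m ⊔ R.1) (by rw [finrank_sup_pt m R hR.2, hm])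
    have h4 := cnt_two m hm
    simp only [true_and, and_true] at h2
    unfold cnt at h3 h4
    rw [h3, h4, hF] at h2
    have h5 : Finset.bipartiteBelow (fun P R => R.1 ≤ m ⊔ P.1) A R =
        Finset.univ.filter (fun P : ProjPoint F (r + 1) => ¬ P.1 ≤ m ∧ P.1 ≤ m ⊔ R.1) := by
      ext P
      simp only [Finset.bipartiteBelow, A, Finset.mem_filter, Finset.mem_univ, true_and]
      constructor
      · rintro ⟨a, b⟩; exact ⟨a, sup_symm m P R a hR.2 b⟩
      · rintro ⟨a, b⟩; exact ⟨a, sup_symm m R P hR.2 a b⟩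
    rw [h5]
    have e1 : (q ^ 2) ^ 2 = q ^ 4 := by ring
    omega
  rw [hdc, hup] at hlow
  exact arith_avg q r V.ncard (secant F (r + 1) V m) A.card hq4 hr hs B.card hB hV.1 hA hlow

theorem exists_zero_pt (V : Set (ProjPoint F n)) (m : Submodule F (Fin n → F))
    (h : secant F n V m < cnt m) : ∃ Z : ProjPoint F n, Z.1 ≤ m ∧ Z ∉ V := by
  by_contra! hcon
  rw [secant_eq] at h
  refine absurd h (not_lt.2 (Finset.card_le_card ?_))
  intro P
  simp only [Finset.mem_filter, Finset.mem_univ, true_and]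
  exact fun h1 => ⟨h1, hcon P h1⟩

theorem exists_off (W m : Submodule F (Fin n → F)) (h : finrank F m < finrank F W) :
    ∃ P : ProjPoint F n, P.1 ≤ W ∧ ¬ P.1 ≤ m := by
  by_contra! hcon
  have : W ≤ m := by
    intro v hv
    by_cases h0 : v = 0
    · rw [h0]; exact m.zero_mem
    · exact (pt_le v h0 m).1 (hcon _ ((pt_le v h0 W).2 hv))
  have := Submodule.finrank_mono this
  omega

theorem dichotomy (p q r : ℕ) [Fact p.Prime] [CharP F p] (hpq : p ∣ q) (hq4 : 4 < q)
    (hr : 3 ≤ r) (hF : Fintype.card F = q ^ 2)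
    (V : Set (ProjPoint F (r + 1))) (hV : IsQuasiHermitian F q r V)
    (hcode : charVec F p (r + 1) V ∈ hypCode F p (r + 1))
    (m : Submodule F (Fin (r + 1) → F)) (hm : finrank F m = 2) :
    secant F (r + 1) V m ≤ q + 1 ∨ q ^ 2 ≤ secant F (r + 1) V m + q + 1 := by
  have hpos : ∀ W : Submodule F (Fin (r + 1) → F), finrank F W = 2 →
      1 ≤ secant F (r + 1) V W := by
    intro W hW
    have := secant_mod p q r hpq hr V hV hcode W hW.ge
    by_contra h
    have h0 : secant F (r + 1) V W = 0 := by omega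
    rw [h0] at this; simp at this
  by_cases hlt : secant F (r + 1) V m < q ^ 2 + 1
  swap
  · right; omega
  obtain ⟨σ, hmσ, hσ, hsz⟩ := exists_small_plane q r hq4 hr hF V hV m hm (hpos m hm)
  obtain ⟨Z, hZm, hZV⟩ := exists_zero_pt V m (by rw [cnt_two m hm, hF]; exact hlt)
  obtain ⟨P, hPσ, hPm⟩ := exists_off σ m (by omega)
  have hPZ : ¬ P.1 ≤ Z.1 := fun h => hPm (h.trans hZm)
  have hm2 := finrank_sup_pt Z.1 P hPZ
  rw [Z.2] at hm2
  have hkl := kl_geom p (by omega) _ hcode Z m (Z.1 ⊔ P.1) σ hm hm2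
    (by intro h; apply hPm; rw [h]; exact le_sup_right) hZm le_sup_left hmσ
    (sup_le (hZm.trans hmσ) hPσ) (by simp [charVec, hZV])
  rw [wt_charVec, wt_charVec, wt_charVec, hF] at hkl
  have h1 := hpos _ hm2
  generalize secant F (r + 1) V m = s at *
  by_contra! hcon
  obtain ⟨h2, h3⟩ := hcon
  have h4 : s * (q ^ 2 + 1) + 1 ≤ q ^ 3 + s + s ^ 2 := by omega
  zify at *
  have h5 : (0 : ℤ) ≤ (s - (q + 2)) * (q ^ 2 - q - 2 - s) :=
    mul_nonneg (by linarith) (by linarith)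
  nlinarith

end QHGeom

namespace QHGeom
open Module Configuration
open scoped Classical
set_option linter.unusedSectionVars false
set_option linter.unusedVariables false

variable {F : Type} [Field F] [Fintype F] {n : ℕ}

/-- Points of the plane. -/
abbrev PPt (π : Submodule F (Fin n → F)) : Type := {P : ProjPoint F n // P.1 ≤ π}

/-- Lines of the plane. -/
abbrev PLn (π : Submodule F (Fin n → F)) : Type :=
  {l : Submodule F (Fin n → F) // l ≤ π ∧ finrank F l = 2}

instance memPL (π : Submodule F (Fin n → F)) : Membership (PPt π) (PLn π) :=
  ⟨fun l P => P.1.1 ≤ l.1⟩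

theorem mem_def (π : Submodule F (Fin n → F)) (P : PPt π) (l : PLn π) :
    P ∈ l ↔ P.1.1 ≤ l.1 := Iff.rfl

noncomputable instance ftP (π : Submodule F (Fin n → F)) : Fintype (PPt π) := by
  unfold PPt; infer_instance

noncomputable instance ftL (π : Submodule F (Fin n → F)) : Fintype (PLn π) := by
  unfold PLn; exact Fintype.ofFinite _

theorem pt_eq_of_le (P R : ProjPoint F n) (h : P.1 ≤ R.1) : P = R :=
  Subtype.ext (Submodule.eq_of_le_of_finrank_eq h (P.2.trans R.2.symm))

theorem join_eq (P R : ProjPoint F n) (hPR : P ≠ R) (l : Submodule F (Fin n → F))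
    (hl : finrank F l = 2) (hP : P.1 ≤ l) (hR : R.1 ≤ l) : P.1 ⊔ R.1 = l := by
  refine Submodule.eq_of_le_of_finrank_eq (sup_le hP hR) ?_
  rw [finrank_sup_pt P.1 R (fun h => hPR (pt_eq_of_le _ _ h).symm), P.2, hl]

/-- The join of two points, as a line of the plane. -/
noncomputable def mkL (π : Submodule F (Fin n → F)) (P R : PPt π) (h : P ≠ R) : PLn π :=
  ⟨P.1.1 ⊔ R.1.1, sup_le P.2 R.2, by
    rw [finrank_sup_pt P.1.1 R.1 (fun h' => h (Subtype.ext (pt_eq_of_le _ _ h').symm)), P.1.2]⟩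

/-- The meet of two lines, as a point of the plane. -/
noncomputable def mkP (π : Submodule F (Fin n → F)) (hπ : finrank F π = 3) (l m : PLn π)
    (h : l ≠ m) : PPt π :=
  ⟨⟨l.1 ⊓ m.1, by
    have h1 := Submodule.finrank_sup_add_finrank_inf_eq l.1 m.1
    have h2 := Submodule.finrank_mono (sup_le l.2.1 m.2.1)
    have h3 : l.1 < l.1 ⊔ m.1 := by
      refine lt_of_le_of_ne le_sup_left fun h' => h (Subtype.ext ?_)
      symm
      refine Submodule.eq_of_le_of_finrank_eq ?_ (m.2.2.trans l.2.2.symm)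
      rw [h']; exact le_sup_right
    have h4 := Submodule.finrank_lt_finrank_of_lt h3
    rw [l.2.2, m.2.2] at h1
    rw [l.2.2] at h4
    omega⟩, inf_le_left.trans l.2.1⟩

theorem exists_pt_off (π : Submodule F (Fin n → F)) (hπ : finrank F π = 3) (l : PLn π) :
    ∃ P : PPt π, P ∉ l := by
  obtain ⟨P, h1, h2⟩ := exists_off π l.1 (by rw [hπ, l.2.2]; omega)
  exact ⟨⟨P, h1⟩, h2⟩

theorem exists_config' (π : Submodule F (Fin n → F)) (hπ : finrank F π = 3) (P : PPt π) :
    ∃ (R S : PPt π) (l : PLn π), R ∈ l ∧ S ∈ l ∧ P ∉ l ∧ R ≠ S := by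
  obtain ⟨R, h1, h2⟩ := exists_off π P.1.1 (by rw [hπ, P.1.2]; omega)
  have hf := finrank_sup_pt P.1.1 R h2
  rw [P.1.2] at hf
  obtain ⟨S, h3, h4⟩ := exists_off π (P.1.1 ⊔ R.1) (by rw [hπ, hf]; omega)
  have hSR : R ≠ S := by rintro rfl; exact h4 le_sup_right
  have hPR : P.1 ≠ R := by rintro h; apply h2; rw [h]
  refine ⟨⟨R, h1⟩, ⟨S, h3⟩, mkL π ⟨R, h1⟩ ⟨S, h3⟩ (fun h => hSR (congrArg Subtype.val h)),
    le_sup_left, le_sup_right, ?_, fun h => hSR (congrArg Subtype.val h)⟩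
  intro h5
  change P.1.1 ≤ R.1 ⊔ S.1 at h5
  apply h4
  have h6 : finrank F (R.1 ⊔ S.1 : Submodule F (Fin n → F)) = 2 := by
    rw [finrank_sup_pt R.1 S (fun h => hSR (pt_eq_of_le _ _ h).symm), R.2]
  rw [join_eq P.1 R hPR _ h6 h5 le_sup_left]
  exact le_sup_right

theorem line_eq (π : Submodule F (Fin n → F)) {P R : PPt π} {l m : PLn π} (h1 : P ∈ l)
    (h2 : R ∈ l) (h3 : P ∈ m) (h4 : R ∈ m) (h : P ≠ R) : l = m := by
  have h' : P.1 ≠ R.1 := fun h' => h (Subtype.ext h')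
  apply Subtype.ext
  rw [← join_eq P.1 R.1 h' l.1 l.2.2 h1 h2, ← join_eq P.1 R.1 h' m.1 m.2.2 h3 h4]

theorem third_pt (π : Submodule F (Fin n → F)) (l : PLn π) (P R : PPt π) :
    ∃ S : PPt π, S ∈ l ∧ S ≠ P ∧ S ≠ R := by
  have h1 := cnt_two l.1 l.2.2
  have h2 := Fintype.one_lt_card (α := F)
  have h3 : ({P.1, R.1} : Finset (ProjPoint F n)).card <
      (Finset.univ.filter (fun P : ProjPoint F n => P.1 ≤ l.1)).card := by
    have := Finset.card_le_two (a := P.1) (b := R.1)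
    unfold cnt at h1
    omega
  obtain ⟨S, h4, h5⟩ := Finset.exists_mem_notMem_of_card_lt_card h3
  simp only [Finset.mem_filter, Finset.mem_univ, true_and, Finset.mem_insert,
    Finset.mem_singleton, not_or] at h4 h5
  exact ⟨⟨S, h4.trans l.2.1⟩, h4, fun h => h5.1 (congrArg Subtype.val h),
    fun h => h5.2 (congrArg Subtype.val h)⟩

/-- The projective plane structure. -/
@[reducible]
noncomputable def planeInst (π : Submodule F (Fin n → F)) (hπ : finrank F π = 3) :
    ProjectivePlane (PPt π) (PLn π) where
  exists_point l := exists_pt_off π hπ l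
  exists_line P := by
    obtain ⟨_, _, l, _, _, h, _⟩ := exists_config' π hπ P
    exact ⟨l, h⟩
  eq_or_eq := by
    intro P R l m h1 h2 h3 h4
    by_cases h : P = R
    · exact Or.inl h
    · exact Or.inr (line_eq π h1 h2 h3 h4 h)
  mkPoint := fun {l m} h => mkP π hπ l m h
  mkPoint_ax := fun {l m} h => ⟨inf_le_left, inf_le_right⟩
  mkLine := fun {P R} h => mkL π P R h
  mkLine_ax := fun {P R} h => ⟨le_sup_left, le_sup_right⟩
  exists_config := by
    obtain ⟨P0, h0, -⟩ := exists_off π ⊥ (by rw [hπ, finrank_bot]; omega)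
    obtain ⟨P2, P3, l2, h2, h3, h1, h23⟩ := exists_config' π hπ ⟨P0, h0⟩
    set P1 : PPt π := ⟨P0, h0⟩
    have h12 : P1 ≠ P2 := fun h => h1 (h ▸ h2)
    have h13 : P1 ≠ P3 := fun h => h1 (h ▸ h3)
    obtain ⟨y, hy, hy2, hy3⟩ := third_pt π l2 P2 P3
    have h1y : P1 ≠ y := fun h => h1 (h ▸ hy)
    have m1 : P1 ∈ mkL π P1 y h1y := (le_sup_left : P1.1.1 ≤ P1.1.1 ⊔ y.1.1)
    have m2 : y ∈ mkL π P1 y h1y := (le_sup_right : y.1.1 ≤ P1.1.1 ⊔ y.1.1)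
    have k1 : P1 ∈ mkL π P1 P3 h13 := (le_sup_left : P1.1.1 ≤ P1.1.1 ⊔ P3.1.1)
    have k3 : P3 ∈ mkL π P1 P3 h13 := (le_sup_right : P3.1.1 ≤ P1.1.1 ⊔ P3.1.1)
    have k2 : P2 ∉ mkL π P1 P3 h13 := fun h => h1 (line_eq π h k3 h2 h3 h23 ▸ k1)
    obtain ⟨x, hx, hx1, hx3⟩ := third_pt π (mkL π P1 P3 h13) P1 P3
    have h2x : P2 ≠ x := fun h => k2 (h ▸ hx)
    have n2 : P2 ∈ mkL π P2 x h2x := (le_sup_left : P2.1.1 ≤ P2.1.1 ⊔ x.1.1)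
    have nx : x ∈ mkL π P2 x h2x := (le_sup_right : x.1.1 ≤ P2.1.1 ⊔ x.1.1)
    refine ⟨P1, P2, P3, mkL π P1 y h1y, l2, mkL π P2 x h2x, h1, ?_, ?_, h2, n2, ?_, h3, ?_⟩
    · intro h; exact k2 (line_eq π h nx k1 hx hx1.symm ▸ n2)
    · intro h; exact h1 (line_eq π h m2 h2 hy hy2.symm ▸ m1)
    · intro h; exact h1 (line_eq π h m2 h3 hy hy3.symm ▸ m1)
    · intro h; exact k2 (line_eq π h nx k3 hx hx3.symm ▸ n2)

theorem card_sub (π : Submodule F (Fin n → F)) (B : ProjPoint F n → Prop) :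
    (Finset.univ.filter (fun x : PPt π => B x.1)).card =
      (Finset.univ.filter (fun P : ProjPoint F n => P.1 ≤ π ∧ B P)).card := by
  refine Finset.card_bij (fun x _ => x.1) ?_ ?_ ?_
  · intro x hx
    simp only [Finset.mem_filter, Finset.mem_univ, true_and] at hx ⊢
    exact ⟨x.2, hx⟩
  · intro x _ y _ h; exact Subtype.ext h
  · intro P hP
    simp only [Finset.mem_filter, Finset.mem_univ, true_and] at hP
    exact ⟨⟨P, hP.1⟩, Finset.mem_filter.2 ⟨Finset.mem_univ _, hP.2⟩, rfl⟩

theorem card_line (π : Submodule F (Fin n → F)) (l : PLn π) (B : ProjPoint F n → Prop) :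
    (Finset.univ.filter (fun x : PPt π => x ∈ l ∧ B x.1)).card =
      (Finset.univ.filter (fun P : ProjPoint F n => P.1 ≤ l.1 ∧ B P)).card := by
  have h := card_sub π (fun P => P.1 ≤ l.1 ∧ B P)
  have h2 : ∀ P : ProjPoint F n, (P.1 ≤ π ∧ P.1 ≤ l.1 ∧ B P) ↔ (P.1 ≤ l.1 ∧ B P) :=
    fun P => ⟨fun h => h.2, fun h => ⟨h.1.trans l.2.1, h⟩⟩
  refine Eq.trans ?_ (h.trans ?_)
  · congr 1
    ext x
    simp only [Finset.mem_filter, mem_def]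
  · congr 1
    ext x
    simp only [Finset.mem_filter, h2]

theorem exists_hyp (π l : Submodule F (Fin n → F)) (hn : 1 ≤ n) (hπ : finrank F π = 3)
    (hl : l ≤ π) (hl2 : finrank F l = 2) :
    ∃ H : Submodule F (Fin n → F), finrank F H = n - 1 ∧ H ⊓ π = l := by
  obtain ⟨P, h1, h2⟩ := exists_off π l (by omega)
  obtain ⟨v, hv, rfl⟩ := exists_pt P
  rw [pt_le] at h1 h2
  obtain ⟨f, hf, hle⟩ := Submodule.exists_le_ker_of_notMem h2
  refine ⟨LinearMap.ker f, ?_, ?_⟩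
  · have e1 := LinearMap.finrank_range_add_finrank_ker f
    have e2 : LinearMap.range f = ⊤ := LinearMap.range_eq_top.2
      (LinearMap.surjective (fun h => hf (by rw [h]; rfl)))
    rw [e2] at e1
    simp at e1
    omega
  · symm
    refine Submodule.eq_of_le_of_finrank_le (le_inf hle hl) ?_
    have hlt : LinearMap.ker f ⊓ π < π := by
      refine lt_of_le_of_ne inf_le_right fun h => hf ?_
      have : v ∈ LinearMap.ker f ⊓ π := by rw [h]; exact h1
      exact this.1
    have := Submodule.finrank_lt_finrank_of_lt hlt
    omega

/-- Restriction of functions to the plane. -/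
noncomputable def res (p : ℕ) (π : Submodule F (Fin n → F)) :
    (ProjPoint F n → ZMod p) →ₗ[ZMod p] (PPt π → ZMod p) :=
  LinearMap.funLeft (ZMod p) (ZMod p) (Subtype.val : PPt π → ProjPoint F n)

theorem res_apply (p : ℕ) (π : Submodule F (Fin n → F)) (c : ProjPoint F n → ZMod p)
    (x : PPt π) : res p π c x = c x.1 := rfl

theorem sec_res (p : ℕ) (π : Submodule F (Fin n → F)) (c : ProjPoint F n → ZMod p) (l : PLn π) :
    QHCore.sec (QHCore.supp (res p π c)) l = wt c l.1 := by
  unfold QHCore.sec QHCore.supp wt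
  refine Eq.trans ?_ ((card_line π l (fun P => c P ≠ 0)).trans ?_)
  · rw [Finset.filter_filter]
    congr 1
    ext x
    simp only [Finset.mem_filter]
    rw [res_apply]
    tauto
  · congr 1
    ext x
    simp only [Finset.mem_filter]

theorem card_res (p : ℕ) (π : Submodule F (Fin n → F)) (c : ProjPoint F n → ZMod p) :
    (QHCore.supp (res p π c)).card = wt c π := by
  unfold QHCore.supp wt
  refine Eq.trans ?_ ((card_sub π (fun P => c P ≠ 0)).trans ?_)
  · congr 1
    ext x
    simp only [Finset.mem_filter]
    rw [res_apply]
  · congr 1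
    ext x
    simp only [Finset.mem_filter]

/-- Points of `V` in the plane. -/
noncomputable def SV (π : Submodule F (Fin n → F)) (V : Set (ProjPoint F n)) : Finset (PPt π) :=
  Finset.univ.filter (fun x => x.1 ∈ V)

theorem card_SV (π : Submodule F (Fin n → F)) (V : Set (ProjPoint F n)) :
    (SV π V).card = secant F n V π := by
  rw [secant_eq, SV, card_sub π (fun P => P ∈ V)]

theorem sec_SV (π : Submodule F (Fin n → F)) (V : Set (ProjPoint F n)) (l : PLn π) :
    QHCore.sec (SV π V) l = secant F n V l.1 := by
  rw [secant_eq, ← card_line π l (fun P => P ∈ V), SV, QHCore.sec, Finset.filter_filter]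
  simp only [and_comm]

theorem charP_of_card (p h q : ℕ) (hp : p.Prime) (hq : q = p ^ h)
    (hF : Fintype.card F = q ^ 2) : CharP F p := by
  obtain ⟨p', hp'⟩ := CharP.exists F
  have h1 := FiniteField.cast_card_eq_zero F
  rw [hF, hq] at h1
  push_cast at h1
  have h2 : (p : F) = 0 := eq_zero_of_pow_eq_zero (eq_zero_of_pow_eq_zero h1)
  have h3 := (CharP.cast_eq_zero_iff F p' p).1 h2
  rcases (Nat.dvd_prime hp).1 h3 with h4 | h4
  · exact absurd h4 (CharP.char_ne_one F p')
  · rw [← h4]; exact hp'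

theorem plane_main (p h q r : ℕ) (hp : p.Prime) (hh : 1 ≤ h) (hq : q = p ^ h) (hq4 : 4 < q)
    (hr : 3 ≤ r) (hF : Fintype.card F = q ^ 2)
    (V : Set (ProjPoint F (r + 1))) (hV : IsQuasiHermitian F q r V)
    (hcode : charVec F p (r + 1) V ∈ hypCode F p (r + 1))
    (π : Submodule F (Fin (r + 1) → F)) (hπ : finrank F π = 3)
    (hsize : secant F (r + 1) V π ≤ q ^ 3 + 2 * q ^ 2)
    (hsec : q ^ 3 + 1 ≤ secant F (r + 1) V π →
      ∃ ℓ : Submodule F (Fin (r + 1) → F), ℓ ≤ π ∧ finrank F ℓ = 2 ∧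
        q ^ 2 - q + 1 ≤ secant F (r + 1) V ℓ) :
    ∃ T : Finset (PLn π), T.card ≤ q + 1 ∧
      QHCore.indS p (SV π V) = ∑ l ∈ T, QHCore.ind p l := by
  have := Fact.mk hp
  have : CharP F p := charP_of_card p h q hp hq hF
  let _ := planeInst π hπ
  have hpq : p ∣ q := hq ▸ dvd_pow_self p (by omega)
  refine QHCore.Core.main (C := (hypCode F p (r + 1)).map (res p π)) ⟨hp, hpq, hq4, ?_, ?_, ?_,
    ?_, ?_, ?_, ?_, ?_, ?_⟩
  · rintro rfl
    have h3 : 3 ≤ h := by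
      by_contra hlt
      have : 2 ^ h ≤ 2 ^ 2 := Nat.pow_le_pow_right (by norm_num) (by omega)
      omega
    have : 2 ^ 3 ≤ 2 ^ h := Nat.pow_le_pow_right (by norm_num) h3
    omega
  · obtain ⟨_, _, _, l, _⟩ := @ProjectivePlane.exists_config (PPt π) (PLn π) _ _
    have h1 := ProjectivePlane.pointCount_eq (PPt π) l
    have h2 : pointCount (PPt π) l = cnt l.1 := by
      rw [pointCount, Nat.card_eq_fintype_card, Fintype.card_subtype, cnt]
      have := card_line π l (fun _ => True)
      simpa only [and_true] using this
    rw [h2, cnt_two l.1 l.2.2, hF] at h1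
    omega
  · intro l
    obtain ⟨H, hH, hHl⟩ := exists_hyp π l.1 (by omega) hπ l.2.1 l.2.2
    refine ⟨charVec F p (r + 1) (pointsIn F (r + 1) H), Submodule.subset_span ⟨H, hH, rfl⟩, ?_⟩
    ext x
    have : x ∈ l ↔ x.1.1 ≤ H := by
      rw [mem_def, ← hHl, le_inf_iff]
      exact ⟨fun h => h.1, fun h => ⟨h, x.2⟩⟩
    rw [res_apply]
    by_cases hx : x.1.1 ≤ H <;>
      simp [charVec, Set.indicator, pointsIn, QHCore.ind, this, hx]
  · refine ⟨_, hcode, ?_⟩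
    ext x
    rw [res_apply]
    simp [charVec, Set.indicator, QHCore.indS, SV]
  · rintro _ ⟨c, hc, rfl⟩ Z l m hZl hZm hlm h0
    rw [sec_res, sec_res, card_res, ← hF]
    exact kl_geom p (by omega) c hc Z.1 l.1 m.1 π l.2.2 m.2.2 (fun h => hlm (Subtype.ext h))
      hZl hZm l.2.1 m.2.1 h0
  · intro l
    rw [sec_SV]
    exact secant_mod p q r hpq hr V hV hcode l.1 l.2.2.ge
  · intro l
    rw [sec_SV]
    exact dichotomy p q r hpq hq4 hr hF V hV hcode l.1 l.2.2
  · rw [card_SV]; exact hsize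
  · rw [card_SV]
    intro h1
    obtain ⟨l, h2, h3, h4⟩ := hsec h1
    exact ⟨⟨l, h2, h3⟩, by rw [sec_SV]; exact h4⟩

end QHGeom

/-- if a plane `π` meets `V` in at most `q³ + 2q²` points and, in case
`|π ∩ V| ≥ q³ + 1`, some line of `π` meets `π ∩ V` in at least `q² - q + 1` points,
then the characteristic vector of `π ∩ V` is a sum of at most `q + 1` distinct lines
of `π`, each with coefficient 1. -/
theorem stmt7 (p h q r : ℕ) (hp : p.Prime) (hh : 1 ≤ h) (hq : q = p ^ h) (hq4 : 4 < q)
    (hr : 3 ≤ r)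
    (F : Type) [Field F] [Fintype F] (hF : Fintype.card F = q ^ 2)
    (V : Set (ProjPoint F (r + 1))) (hV : IsQuasiHermitian F q r V)
    (hcode : charVec F p (r + 1) V ∈ hypCode F p (r + 1))
    (π : Submodule F (Fin (r + 1) → F)) (hπ : finrank F π = 3)
    (hsize : secant F (r + 1) V π ≤ q ^ 3 + 2 * q ^ 2)
    (hsec : q ^ 3 + 1 ≤ secant F (r + 1) V π →
      ∃ ℓ : Submodule F (Fin (r + 1) → F), ℓ ≤ π ∧ finrank F ℓ = 2 ∧
        q ^ 2 - q + 1 ≤ secant F (r + 1) V ℓ) :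
    ∃ L : Finset (Submodule F (Fin (r + 1) → F)), L.card ≤ q + 1 ∧
      (∀ ℓ ∈ L, ℓ ≤ π ∧ finrank F ℓ = 2) ∧
      charVec F p (r + 1) (V ∩ pointsIn F (r + 1) π)
        = ∑ ℓ ∈ L, charVec F p (r + 1) (pointsIn F (r + 1) ℓ) := by
  classical
  obtain ⟨T, hT, hsum⟩ := QHGeom.plane_main p h q r hp hh hq hq4 hr hF V hV hcode π hπ hsize hsec
  refine ⟨T.map ⟨fun l => l.1, fun a b h => Subtype.ext h⟩, ?_, ?_, ?_⟩
  · rw [Finset.card_map]; exact hT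
  · intro l hl
    obtain ⟨m, -, rfl⟩ := Finset.mem_map.1 hl
    exact m.2
  · rw [Finset.sum_map]
    ext P
    rw [Finset.sum_apply]
    by_cases hP : P.1 ≤ π
    · have h1 := congrFun hsum ⟨P, hP⟩
      rw [Finset.sum_apply] at h1
      have h2 : charVec F p (r + 1) (V ∩ pointsIn F (r + 1) π) P =
          QHCore.indS p (QHGeom.SV π V) ⟨P, hP⟩ := by
        by_cases hPV : P ∈ V <;>
          simp [charVec, Set.indicator, pointsIn, QHCore.indS, QHGeom.SV, hP, hPV]
      rw [h2, h1]
      refine Finset.sum_congr rfl fun l _ => ?_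
      change _ = charVec F p (r + 1) (pointsIn F (r + 1) l.1) P
      by_cases hl : P.1 ≤ l.1 <;>
        simp [charVec, Set.indicator, pointsIn, QHCore.ind, QHGeom.mem_def, hl]
    · rw [Finset.sum_eq_zero]
      · simp [charVec, Set.indicator, pointsIn, hP]
      · intro l _
        have : ¬ P.1 ≤ l.1 := fun h => hP (h.trans l.2.1)
        change charVec F p (r + 1) (pointsIn F (r + 1) l.1) P = 0
        simp [charVec, Set.indicator, pointsIn, this]
end
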